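/- Let f₀ = Σ c_i x^i and f₁ = Σ c̄_i x^i be entire functions with positive coefficients both satisfying ∫_0^∞ c_i x^i / f(x) dx = 1 − β δ_{0i} for all i ≥ 0 (with β ∈ [0,1)). For t ∈ [0,1] set f_t = t f₁ + (1−t) f₀, a_i(t) = t c̄_i + (1−t) c_i, and b_i(t) = ∫_0^∞ a_i(t) x^i / f_t(x) dx. If c_i = c̄_i, then b_i''(t) = ∫_0^∞ 2 x^i a_i(t) (f₁ − f₀)² / f_t³ dx > 0, hence b_i'(0) < 0 < b_i'(1). -/

import Mathlib

/-!
The hypotheses are contradictory: two solutions of the balanced equation are proportional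
(`BalancedSeries.unique`), so they coincide once one pair of coefficients agrees, against `f₀ ≠ f₁`.
The conclusion follows vacuously. What has to be proved is this uniqueness.

For a solution `f = ∑ c n x ^ n` and `x > 0`, the numbers `weight c f n x = c n x ^ n / f x` form a
probability distribution in `n`. By Cauchy–Schwarz the `c n` are log-concave, and since the weights
have integral one in `x`, some weight at `x` is at least of order `x ^ (-1/2)`. Together these make
the distribution decay geometrically at scale `x ^ (1/2)` around some index, which is close to `x`
because the distribution function `cdf c f n` has integral `n - β`
(`BalancedSeries.concentration`).

For two solutions `f, g` with weights `p i, q i`, the energies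
`ε i = ∫ (q i - p i) (log q i - log p i) dx ≥ 0` satisfy, since the weights have equal integrals and
`log q i - log p i` is `- log (g / f)` up to a constant,
`∑ i < n, ε i = ∫ (log (g / f) - a) (cdf c f n - cdf d g n) dx` for every constant `a`
(`BalancedSeries.sum_energy_eq`). Two consequences are drawn from this identity. The left side is
`O(n ^ 2)` (`BalancedSeries.energy_growth`). On the other hand, take `a` to be the value of
`log (g / f)` at `n`, with `n` of order `Q ^ 5`. By concentration only an interval of radius
`4 Q ^ 3` around `n` matters; there `(log (g / f))'`, which is the difference of the means divided
by `x`, and the difference of the distribution functions are both bounded by the total variation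
of the weights on a window of radius `6 Q ^ 3`, whose square is at most twice the energy density. Hence
`∑ i < n, ε i ≤ 640 Q * (energy in the window) + O(1 / Q)` (`BalancedSeries.energy_window`). If
`ε 0 > 0`, iterating this window inequality makes the partial sums grow faster than quadratically.
So `ε 0 = 0`, which says that `p 0 = q 0`, that is, `g / f` is constant.
-/

open MeasureTheory Real Set

/-! ### The probability distributions attached to a balanced series -/

/-- A power series `f = ∑ c n x ^ n` with positive coefficients satisfying the balanced equation
with parameter `β`. Convergence is not assumed: it follows from the equation, see
`BalancedSeries.summable`. -/
structure BalancedSeries (β : ℝ) (c : ℕ → ℝ) (f : ℝ → ℝ) : Prop where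
  hβ0 : 0 ≤ β
  hβ1 : β < 1
  pos : ∀ n, 0 < c n
  sum : ∀ x : ℝ, f x = ∑' n : ℕ, c n * x ^ n
  bal : ∀ n : ℕ, (∫ x in Ioi (0:ℝ), c n * x ^ n / f x) = 1 - if n = 0 then β else 0

/-- The `n`-th term of the series relative to its sum. For fixed `x > 0` the numbers `weight c f n x`
form a probability distribution in `n`. -/
noncomputable def weight (c : ℕ → ℝ) (f : ℝ → ℝ) (n : ℕ) (x : ℝ) : ℝ := c n * x ^ n / f x

/-- The mass that the distribution `n ↦ weight c f n x` gives to `{i | i < n}`; the inequality is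
strict, so that `cdf c f 0 = 0`. -/
noncomputable def cdf (c : ℕ → ℝ) (f : ℝ → ℝ) (n : ℕ) (x : ℝ) : ℝ := ∑ i ∈ Finset.range n, weight c f i x

namespace BalancedSeries

variable {β : ℝ} {c : ℕ → ℝ} {f : ℝ → ℝ}

/-- Integrability comes from the nonvanishing of the integral, as a non-integrable function has
integral zero by convention. -/
lemma integrable (h : BalancedSeries β c f) (n : ℕ) : IntegrableOn (weight c f n) (Ioi 0) := by
  apply MeasureTheory.Integrable.of_integral_ne_zero
  have := h.bal n
  have h1 := h.hβ1
  unfold weight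
  rw [this]
  split_ifs <;> linarith

/-- If the series diverged at `x`, then `f` would vanish on `[x, ∞)` by the convention for divergent
sums, so that the integrals of the weights `1, …, N` would sum to at most `x < N`; but each of them
is `1`. -/
lemma summable_nonneg (h : BalancedSeries β c f) {x : ℝ} (hx : 0 ≤ x) :
    Summable (fun n => c n * x ^ n) := by
  by_contra hns
  obtain ⟨N, hN⟩ := exists_nat_gt x
  have hz : ∀ t, x ≤ t → f t = 0 := by
    intro t ht
    rw [h.sum]
    apply tsum_eq_zero_of_not_summable
    intro hs
    apply hns
    refine Summable.of_nonneg_of_le (fun n => mul_nonneg (h.pos n).le (by positivity)) ?_ hs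
    intro n
    exact mul_le_mul_of_nonneg_left (pow_le_pow_left₀ hx ht n) (h.pos n).le
  have hle : ∀ t ∈ Ioi (0:ℝ), ∑ i ∈ Finset.range N, weight c f (i+1) t
      ≤ (Ioc 0 x).indicator (fun _ => (1:ℝ)) t := by
    intro t ht
    have ht' : 0 < t := ht
    by_cases hft : f t = 0
    · simp only [weight, hft, div_zero, Finset.sum_const_zero]
      exact Set.indicator_nonneg (fun _ _ => zero_le_one) t
    · have hxt : t ≤ x := by
        by_contra hcon
        exact hft (hz t (not_le.1 hcon).le)
      rw [Set.indicator_of_mem (show t ∈ Ioc 0 x from ⟨ht', hxt⟩)]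
      have hsm : Summable (fun n => c n * t ^ n) := by
        by_contra hcon
        exact hft (by rw [h.sum]; exact tsum_eq_zero_of_not_summable hcon)
      have h1 : ∑ i ∈ Finset.range (N+1), c i * t ^ i ≤ f t := by
        rw [h.sum]
        exact hsm.sum_le_tsum _ (fun n _ => mul_nonneg (h.pos n).le (by positivity))
      rw [Finset.sum_range_succ'] at h1
      have h0 := h.pos 0
      have h2 : 0 ≤ ∑ i ∈ Finset.range N, c (i+1) * t ^ (i+1) :=
        Finset.sum_nonneg fun n _ => mul_nonneg (h.pos _).le (by positivity)
      unfold weight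
      rw [← Finset.sum_div, div_le_one (by simp at h1; linarith)]
      simp at h1; linarith
  have hintg := setIntegral_mono_on (μ := volume) (s := Ioi (0:ℝ))
    (integrable_finsetSum _ fun i _ => h.integrable (i+1)) ?_ measurableSet_Ioi hle
  · rw [integral_finsetSum _ fun i _ => h.integrable (i+1)] at hintg
    have : ∀ i, ∫ t in Ioi (0:ℝ), weight c f (i+1) t = 1 := by
      intro i; have := h.bal (i+1); simpa [weight] using this
    simp only [this] at hintg
    rw [setIntegral_indicator measurableSet_Ioc] at hintg
    have h3 : Ioi (0:ℝ) ∩ Ioc 0 x = Ioc 0 x := by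
      ext t; simp
    rw [h3] at hintg
    simp [hx] at hintg
    linarith
  · apply Integrable.integrableOn
    rw [integrable_indicator_iff measurableSet_Ioc]
    simp

lemma summable (h : BalancedSeries β c f) (x : ℝ) : Summable (fun n => c n * x ^ n) := by
  refine Summable.of_norm ((h.summable_nonneg (abs_nonneg x)).congr fun n => ?_)
  rw [norm_mul, norm_pow, Real.norm_eq_abs, Real.norm_eq_abs, abs_of_pos (h.pos n)]

lemma f_pos (h : BalancedSeries β c f) {x : ℝ} (hx : 0 ≤ x) : 0 < f x := by
  rw [h.sum]
  exact (h.summable x).tsum_pos (fun n => mul_nonneg (h.pos n).le (by positivity)) 0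
    (by simpa using h.pos 0)

lemma weight_nonneg (h : BalancedSeries β c f) {x : ℝ} (hx : 0 ≤ x) (n : ℕ) : 0 ≤ weight c f n x :=
  div_nonneg (mul_nonneg (h.pos n).le (by positivity)) (h.f_pos hx).le

lemma weight_pos (h : BalancedSeries β c f) {x : ℝ} (hx : 0 < x) (n : ℕ) : 0 < weight c f n x :=
  div_pos (mul_pos (h.pos n) (by positivity)) (h.f_pos hx.le)

lemma hasSum_weight (h : BalancedSeries β c f) {x : ℝ} (hx : 0 ≤ x) :
    HasSum (fun n => weight c f n x) 1 := by
  have h1 := (h.summable x).hasSum.div_const (f x)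
  rw [← h.sum, div_self (h.f_pos hx).ne'] at h1
  exact h1

lemma integral_weight (h : BalancedSeries β c f) (n : ℕ) :
    ∫ x in Ioi (0:ℝ), weight c f n x = 1 - if n = 0 then β else 0 := h.bal n

lemma cdf_nonneg (h : BalancedSeries β c f) {x : ℝ} (hx : 0 ≤ x) (n : ℕ) : 0 ≤ cdf c f n x :=
  Finset.sum_nonneg fun i _ => h.weight_nonneg hx i

lemma cdf_le_one (h : BalancedSeries β c f) {x : ℝ} (hx : 0 ≤ x) (n : ℕ) : cdf c f n x ≤ 1 :=
  sum_le_hasSum _ (fun i _ => h.weight_nonneg hx i) (h.hasSum_weight hx)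

lemma weight_le_one (h : BalancedSeries β c f) {x : ℝ} (hx : 0 ≤ x) (n : ℕ) : weight c f n x ≤ 1 :=
  le_hasSum (h.hasSum_weight hx) n fun i _ => h.weight_nonneg hx i

lemma hasSum_tail (h : BalancedSeries β c f) {x : ℝ} (hx : 0 ≤ x) (n : ℕ) :
    HasSum (fun i => weight c f (i + n) x) (1 - cdf c f n x) := by
  unfold cdf
  rw [hasSum_nat_add_iff' (f := fun i => weight c f i x) n]
  exact h.hasSum_weight hx

lemma integrable_cdf (h : BalancedSeries β c f) (n : ℕ) : IntegrableOn (cdf c f n) (Ioi 0) :=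
  integrable_finsetSum _ fun i _ => h.integrable i

lemma integral_cdf (h : BalancedSeries β c f) (n : ℕ) :
    ∫ x in Ioi (0:ℝ), cdf c f (n+1) x = n + 1 - β := by
  unfold cdf
  rw [integral_finsetSum _ fun i _ => h.integrable i]
  simp only [h.integral_weight]
  rw [Finset.sum_range_succ']
  simp
  ring

lemma weight_eq (h : BalancedSeries β c f) {x t : ℝ} (hx : 0 < x) (ht : 0 < t) (n : ℕ) :
    weight c f n t = weight c f n x * (t / x) ^ n * (f x / f t) := by
  have := h.f_pos hx.le
  have := h.f_pos ht.le
  unfold weight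
  rw [div_pow]
  field_simp

lemma hasSum_ratio (h : BalancedSeries β c f) {x t : ℝ} (hx : 0 < x) (ht : 0 < t) :
    HasSum (fun n => weight c f n x * (t / x) ^ n) (f t / f x) := by
  have h1 := h.f_pos hx.le
  have h2 := h.f_pos ht.le
  have := (h.hasSum_weight ht.le).mul_right (f t / f x)
  rw [one_mul] at this
  refine this.congr_fun (fun n => ?_)
  rw [h.weight_eq hx ht n]
  field_simp

/-- Monotone likelihood ratio: increasing `x` moves the distribution to the right. -/
lemma cdf_antitone (h : BalancedSeries β c f) {x t : ℝ} (hx : 0 < x) (hxt : x ≤ t) (n : ℕ) :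
    cdf c f n t ≤ cdf c f n x := by
  have ht := hx.trans_le hxt
  have h1 := h.f_pos hx.le
  have h2 := h.f_pos ht.le
  have hl : 1 ≤ t / x := by rwa [le_div_iff₀ hx, one_mul]
  have e1 : cdf c f n t ≤ cdf c f n x * (t / x) ^ n * (f x / f t) := by
    unfold cdf
    rw [Finset.sum_mul, Finset.sum_mul]
    apply Finset.sum_le_sum
    intro i hi
    rw [h.weight_eq hx ht i]
    gcongr
    · exact h.weight_nonneg hx.le i
    · exact (Finset.mem_range.1 hi).le
  have e2 : (1 - cdf c f n x) * (t / x) ^ n * (f x / f t) ≤ 1 - cdf c f n t := by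
    refine hasSum_le (fun i => ?_) (((h.hasSum_tail hx.le n).mul_right ((t / x) ^ n)).mul_right
      (f x / f t)) (h.hasSum_tail ht.le n)
    rw [h.weight_eq hx ht (i+n)]
    gcongr
    · exact h.weight_nonneg hx.le _
    · omega
  have a0 := h.cdf_nonneg hx.le n
  have a1 := h.cdf_le_one hx.le n
  have b0 := h.cdf_nonneg ht.le n
  have b1 := h.cdf_le_one ht.le n
  have hK : 0 < (t / x) ^ n * (f x / f t) := by positivity
  set K := (t / x) ^ n * (f x / f t)
  rw [mul_assoc] at e1 e2
  nlinarith

end BalancedSeries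

/-! ### A lower bound for the largest weight -/

lemma integrableOn_div_pow {X : ℝ} (hX : 0 < X) (j : ℕ) :
    IntegrableOn (fun t : ℝ => (X / t) ^ (j + 2)) (Ioi X) := by
  have h1 := (integrableOn_Ioi_rpow_of_lt (a := -((j:ℝ)+2)) (c := X) (by have : (0:ℝ) ≤ j := by positivity
                                                                         linarith) hX).const_mul (X ^ (j+2))
  refine IntegrableOn.congr_fun h1 ?_ measurableSet_Ioi
  intro t ht
  have ht' : 0 < t := hX.trans ht
  simp only
  rw [Real.rpow_neg ht'.le, div_pow, div_eq_mul_inv]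
  congr 2
  exact_mod_cast Real.rpow_natCast t (j+2)

lemma integral_div_pow {X : ℝ} (hX : 0 < X) (j : ℕ) :
    ∫ t in Ioi X, (X / t) ^ (j + 2) = X / (j + 1) := by
  have h1 := integral_Ioi_rpow_of_lt (a := -((j:ℝ)+2)) (c := X) (by have : (0:ℝ) ≤ j := by positivity
                                                                    linarith) hX
  have h2 : ∫ t in Ioi X, (X / t) ^ (j + 2) = ∫ t in Ioi X, X ^ (j+2) * t ^ (-((j:ℝ)+2)) := by
    refine setIntegral_congr_fun measurableSet_Ioi ?_
    intro t ht
    have ht' : 0 < t := hX.trans ht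
    simp only
    rw [Real.rpow_neg ht'.le, div_pow, div_eq_mul_inv]
    congr 2
    exact_mod_cast (Real.rpow_natCast t (j+2)).symm
  rw [h2, integral_const_mul, h1]
  have h3 : -((j:ℝ)+2) + 1 = -((j + 1 : ℕ) : ℝ) := by push_cast; ring
  rw [h3, Real.rpow_neg hX.le, Real.rpow_natCast]
  push_cast
  have : (j:ℝ) + 1 ≠ 0 := by positivity
  field_simp
  ring

namespace BalancedSeries

variable {β : ℝ} {c : ℕ → ℝ} {f : ℝ → ℝ}

/-- Only the terms with index at least `n` are kept in `f t / f x = ∑ weight c f i x * (t / x) ^ i`. -/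
lemma ratio_ge_upper (h : BalancedSeries β c f) {x t : ℝ} (hx : 0 < x) (hxt : x ≤ t) (n : ℕ) :
    (1 - cdf c f n x) * (t / x) ^ n ≤ f t / f x := by
  have ht := hx.trans_le hxt
  have hl : 1 ≤ t / x := by rwa [le_div_iff₀ hx, one_mul]
  have h1 := (h.hasSum_tail hx.le n).mul_right ((t / x) ^ n)
  have h2 := (hasSum_nat_add_iff' n).2 (h.hasSum_ratio hx ht)
  have h3 := hasSum_le (fun i => ?_) h1 h2
  · refine h3.trans ?_
    rw [sub_le_self_iff]
    exact Finset.sum_nonneg fun i _ => mul_nonneg (h.weight_nonneg hx.le i) (by positivity)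
  · gcongr
    · exact h.weight_nonneg hx.le _
    · omega

/-- Only the terms with index at most `n` are kept in `f t / f x = ∑ weight c f i x * (t / x) ^ i`. -/
lemma ratio_ge_lower (h : BalancedSeries β c f) {x t : ℝ} (ht : 0 < t) (hxt : t ≤ x) (n : ℕ) :
    cdf c f (n + 1) x * (t / x) ^ n ≤ f t / f x := by
  have hx := ht.trans_le hxt
  have hl : t / x ≤ 1 := by rwa [div_le_iff₀ hx, one_mul]
  refine le_trans ?_ (sum_le_hasSum (Finset.range (n+1)) (fun i _ => ?_) (h.hasSum_ratio hx ht))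
  · unfold cdf
    rw [Finset.sum_mul]
    apply Finset.sum_le_sum
    intro i hi
    have := Finset.mem_range.1 hi
    apply mul_le_mul_of_nonneg_left _ (h.weight_nonneg hx.le _)
    exact pow_le_pow_of_le_one (by positivity) hl (by omega)
  · exact mul_nonneg (h.weight_nonneg hx.le i) (by positivity)

lemma exists_median (h : BalancedSeries β c f) {x : ℝ} (hx : 0 < x) :
    ∃ n, cdf c f n x < 1 / 2 ∧ 1 / 2 ≤ cdf c f (n + 1) x := by
  have hex : ∃ n, 1 / 2 ≤ cdf c f n x := by
    have := (h.hasSum_weight hx.le).tendsto_sum_nat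
    have := this.eventually (eventually_ge_nhds (show (1/2:ℝ) < 1 by norm_num))
    exact this.exists
  classical
  have h1 := Nat.find_spec hex
  have h0 : Nat.find hex ≠ 0 := by
    intro h0
    rw [h0] at h1
    simp [cdf] at h1
    linarith
  obtain ⟨n, hn⟩ := Nat.exists_eq_succ_of_ne_zero h0
  refine ⟨n, ?_, ?_⟩
  · have := Nat.find_min hex (m := n) (by omega)
    exact not_le.1 this
  · rwa [hn] at h1

/-- Some weight at `x` is at least of order `x ^ (-1/2)`. If all of them were smaller, the
distribution at `x` would be so spread out that the weight of its median would decay quickly on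
both sides of `x`, and its integral would be too small. -/
lemma exists_weight_ge (h : BalancedSeries β c f) :
    ∃ κ : ℝ, 0 < κ ∧ κ ≤ 1 ∧ ∀ x : ℝ, 1 ≤ x → ∃ m, κ / √x ≤ weight c f m x := by
  have hβ0 := h.hβ0
  have hβ1 := h.hβ1
  refine ⟨(1 - β) / 16, by linarith, by linarith, fun x hx1 => ?_⟩
  by_contra! hcon
  have hx : 0 < x := by linarith
  have hs1 : 1 ≤ √x := Real.one_le_sqrt.2 hx1
  set a := (1 - β) / 16 / √x with ha
  have ha0 : 0 < a := div_pos (by linarith) (by linarith)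
  have ha16 : a ≤ 1 / 16 := by
    rw [ha, div_le_iff₀ (by linarith)]
    linarith
  have ha2 : 64 * a ^ 2 * x < 1 - β := by
    have : a ^ 2 * x = ((1 - β) / 16) ^ 2 := by
      rw [ha, div_pow, Real.sq_sqrt hx.le]; field_simp
    rw [mul_assoc, this]
    nlinarith
  obtain ⟨n, hn1, hn2⟩ := h.exists_median hx
  -- `k + 2` consecutive weights carry at most `1 / 4`, so a quarter of the mass lies at distance at
  -- least `k + 2` from the median on either side, with `k` of order `1 / a`
  obtain ⟨k, hk1, hk2⟩ : ∃ k : ℕ, (k + 2 : ℝ) * a ≤ 1 / 4 ∧ 1 / (8 * a) ≤ (k + 1 : ℝ) := by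
    have h4 : (4:ℝ) ≤ 1 / (4 * a) := by rw [le_div_iff₀ (by positivity)]; linarith
    have hfl : 2 ≤ ⌊1 / (4 * a)⌋₊ := Nat.le_floor (by push_cast; linarith)
    refine ⟨⌊1 / (4 * a)⌋₊ - 2, ?_, ?_⟩
    · rw [Nat.cast_sub hfl]
      have := Nat.floor_le (show 0 ≤ 1 / (4 * a) by positivity)
      calc _ = (⌊1 / (4 * a)⌋₊ : ℝ) * a := by push_cast; ring
        _ ≤ 1 / (4 * a) * a := by gcongr
        _ = 1 / 4 := by field_simp
    · rw [Nat.cast_sub hfl]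
      have := Nat.lt_floor_add_one (1 / (4 * a))
      have e : 1 / (8 * a) = 1 / (4 * a) / 2 := by field_simp; norm_num
      rw [e]
      push_cast
      linarith
  have hsum : ∀ s : Finset ℕ, ∑ i ∈ s, weight c f i x ≤ s.card * a := by
    intro s
    rw [← nsmul_eq_mul]
    exact Finset.sum_le_card_nsmul _ _ _ fun i _ => (hcon i).le
  have hup : 1 / 4 ≤ 1 - cdf c f (n + (k + 2)) x := by
    have e : cdf c f (n + (k+2)) x = cdf c f n x + ∑ i ∈ Finset.range (k+2), weight c f (n+i) x :=
      Finset.sum_range_add _ _ _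
    have : ∑ i ∈ Finset.range (k+2), weight c f (n+i) x ≤ (k + 2 : ℝ) * a := by
      have := Finset.sum_le_card_nsmul (Finset.range (k+2)) (fun i => weight c f (n+i) x) a
        fun i _ => (hcon _).le
      simpa using this
    linarith
  have hkn : k + 2 ≤ n := by
    by_contra hlt
    have h5 := hsum (Finset.range (n+1))
    have : ((n + 1 : ℕ) : ℝ) ≤ k + 2 := by norm_cast; omega
    have : ((n + 1 : ℕ) : ℝ) * a ≤ 1 / 4 := (mul_le_mul_of_nonneg_right this ha0.le).trans hk1
    unfold cdf at hn2
    simp only [Finset.card_range] at h5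
    linarith
  obtain ⟨l, rfl⟩ : ∃ l, n = l + (k + 2) := ⟨n - (k+2), by omega⟩
  have hlow : 1 / 4 ≤ cdf c f (l + 1) x := by
    have e : cdf c f (l + (k + 2) + 1) x
        = cdf c f (l+1) x + ∑ i ∈ Finset.range (k+2), weight c f (l+1+i) x := by
      rw [show l + (k+2) + 1 = (l+1) + (k+2) by ring]
      exact Finset.sum_range_add _ _ _
    have : ∑ i ∈ Finset.range (k+2), weight c f (l+1+i) x ≤ (k + 2 : ℝ) * a := by
      have := Finset.sum_le_card_nsmul (Finset.range (k+2)) (fun i => weight c f (l+1+i) x) a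
        fun i _ => (hcon _).le
      simpa using this
    linarith
  set n := l + (k + 2) with hn
  have hfx := h.f_pos hx.le
  have b1 : ∀ t ∈ Ioi x, weight c f n t ≤ 4 * a * (x / t) ^ (k + 2) := by
    intro t ht
    have ht0 : 0 < t := hx.trans ht
    have hft := h.f_pos ht0.le
    have hr := h.ratio_ge_upper hx (le_of_lt ht) (n + (k+2))
    have hr2 : 1 / 4 * (t / x) ^ (n + (k+2)) ≤ f t / f x := le_trans (by gcongr) hr
    rw [le_div_iff₀ hfx] at hr2
    rw [h.weight_eq hx ht0 n]
    calc weight c f n x * (t / x) ^ n * (f x / f t) ≤ a * (t / x) ^ n * (f x / f t) := by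
          gcongr; exact (hcon n).le
      _ ≤ a * (t / x) ^ n * (4 / (t / x) ^ (n + (k+2))) := by
          gcongr a * (t / x) ^ n * ?_
          rw [div_le_div_iff₀ hft (by positivity)]
          linarith
      _ = 4 * a * (x / t) ^ (k + 2) := by
          have hq : 0 < t / x := by positivity
          rw [show x / t = (t / x)⁻¹ by rw [inv_div], inv_pow, pow_add]
          generalize t / x = q at hq
          field_simp
          rw [hn]
          ring
  have b2 : ∀ t ∈ Ioc 0 x, weight c f n t ≤ 4 * a * (t / x) ^ (k + 2) := by
    intro t ht
    have ht0 : 0 < t := ht.1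
    have hft := h.f_pos ht0.le
    have hr := h.ratio_ge_lower ht0 ht.2 l
    have hr2 : 1 / 4 * (t / x) ^ l ≤ f t / f x := le_trans (by gcongr) hr
    rw [le_div_iff₀ hfx] at hr2
    rw [h.weight_eq hx ht0 n]
    calc weight c f n x * (t / x) ^ n * (f x / f t) ≤ a * (t / x) ^ n * (f x / f t) := by
          gcongr; exact (hcon n).le
      _ ≤ a * (t / x) ^ n * (4 / (t / x) ^ l) := by
          gcongr a * (t / x) ^ n * ?_
          rw [div_le_div_iff₀ hft (by positivity)]
          linarith
      _ = 4 * a * (t / x) ^ (k + 2) := by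
          rw [hn, pow_add]; field_simp
  have hsplit : ∫ t in Ioi (0:ℝ), weight c f n t
      = (∫ t in Ioc 0 x, weight c f n t) + ∫ t in Ioi x, weight c f n t := by
    rw [← setIntegral_union]
    · rw [Ioc_union_Ioi_eq_Ioi hx.le]
    · exact Set.disjoint_left.2 fun t h1 h2 => not_lt.2 h1.2 h2
    · exact measurableSet_Ioi
    · exact (h.integrable n).mono_set (fun t ht => ht.1)
    · exact (h.integrable n).mono_set (fun t ht => hx.trans ht)
  have i1 : ∫ t in Ioi x, weight c f n t ≤ 4 * a * (x / (k + 1)) := by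
    rw [← integral_div_pow hx, ← integral_const_mul]
    exact setIntegral_mono_on ((h.integrable n).mono_set (fun t ht => hx.trans ht))
      ((integrableOn_div_pow hx k).const_mul _) measurableSet_Ioi b1
  have i2 : ∫ t in Ioc 0 x, weight c f n t ≤ 4 * a * (x / (k + 1)) := by
    have e1 : ∫ t in Ioc 0 x, 4 * a * (t / x) ^ (k+2) = 4 * a * (x / (k + 3)) := by
      rw [integral_const_mul, ← intervalIntegral.integral_of_le hx.le]
      simp only [div_pow]
      rw [intervalIntegral.integral_div, integral_pow]
      have : (k:ℝ) + 3 ≠ 0 := by positivity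
      have : (k:ℝ) + 2 + 1 ≠ 0 := by positivity
      push_cast
      rw [zero_pow (by omega), sub_zero]
      field_simp
      ring
    calc _ ≤ ∫ t in Ioc 0 x, 4 * a * (t / x) ^ (k+2) := by
          refine setIntegral_mono_on ((h.integrable n).mono_set (fun t ht => ht.1)) ?_
            measurableSet_Ioc b2
          exact Continuous.integrableOn_Ioc (by fun_prop)
      _ = 4 * a * (x / (k + 3)) := e1
      _ ≤ _ := by gcongr; norm_num
  have hw : 1 - β ≤ ∫ t in Ioi (0:ℝ), weight c f n t := by
    rw [h.integral_weight]; split_ifs <;> linarith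
  have hk3 : x / (k + 1 : ℝ) ≤ 8 * a * x := by
    rw [div_le_iff₀ (by positivity)]
    rw [div_le_iff₀ (by positivity)] at hk2
    nlinarith
  have : 4 * a * (x / (k + 1)) ≤ 4 * a * (8 * a * x) := by gcongr
  nlinarith

end BalancedSeries

/-! ### Log-concavity and geometric decay -/

section LogConcave

variable {q : ℕ → ℝ}

lemma LogConcave.ratio (hq : ∀ i, 0 < q i) (hlc : ∀ i, q i * q (i + 2) ≤ q (i + 1) ^ 2)
    (i d : ℕ) : q (i + d + 1) * q i ≤ q (i + 1) * q (i + d) := by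
  induction d with
  | zero => simp
  | succ d ih =>
    have h1 := hlc (i + d)
    have h2 := hq (i + d)
    have h3 := hq (i + d + 1)
    have h4 := hq i
    have e : q (i + (d + 1) + 1) = q (i + d + 2) := by congr 1
    have e' : q (i + (d + 1)) = q (i + d + 1) := by congr 1
    rw [e, e']
    refine le_of_mul_le_mul_left ?_ h2
    calc q (i+d) * (q (i + d + 2) * q i) = (q (i+d) * q (i+d+2)) * q i := by ring
      _ ≤ q (i+d+1) ^ 2 * q i := by gcongr
      _ = q (i+d+1) * (q (i + d + 1) * q i) := by ring
      _ ≤ q (i+d+1) * (q (i + 1) * q (i + d)) := by gcongr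
      _ = _ := by ring

/-- For a positive log-concave sequence, `q (j + k) / q j` decreases in `j`. -/
lemma LogConcave.shift (hq : ∀ i, 0 < q i) (hlc : ∀ i, q i * q (i + 2) ≤ q (i + 1) ^ 2)
    (i d k : ℕ) : q (i + d + k) * q i ≤ q (i + k) * q (i + d) := by
  induction k with
  | zero => simp [mul_comm]
  | succ k ih =>
    have h1 := LogConcave.ratio hq hlc (i + k) d
    have e : i + k + d = i + d + k := by ring
    rw [e] at h1
    have h4 := hq i
    have h5 := hq (i + k + 1)
    refine le_of_mul_le_mul_left ?_ (hq (i + k))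
    calc q (i+k) * (q (i + d + (k + 1)) * q i) = (q (i + d + k + 1) * q (i+k)) * q i := by
          rw [← add_assoc]; ring
      _ ≤ (q (i + k + 1) * q (i + d + k)) * q i := by gcongr
      _ = q (i+k+1) * (q (i + d + k) * q i) := by ring
      _ ≤ q (i+k+1) * (q (i + k) * q (i + d)) := by gcongr
      _ = _ := by rw [← add_assoc]; ring

/-- A positive log-concave sequence is unimodal, hence at least the minimum of its end values on any
interval. -/
lemma LogConcave.min_le (hq : ∀ i, 0 < q i) (hlc : ∀ i, q i * q (i + 2) ≤ q (i + 1) ^ 2)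
    (i j k : ℕ) : min (q i) (q (i + j + k)) ≤ q (i + j) := by
  rw [min_le_iff]
  by_contra! hcon
  -- some step after `i + j` increases, so by log-concavity all steps from `i` to `i + j` increase
  have hinc : ∃ b, q (i + j + b) < q (i + j + b + 1) := by
    by_contra! hno
    have : ∀ b, q (i + j + b) ≤ q (i + j) := by
      intro b
      induction b with
      | zero => simp
      | succ b ih => exact (hno b).trans ih
    exact absurd hcon.2 (not_lt.2 (this k))
  obtain ⟨b, hb⟩ := hinc
  have hmono : ∀ a, a ≤ j → q i ≤ q (i + a) := by
    intro a ha
    induction a with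
    | zero => simp
    | succ a ih =>
      refine (ih (by omega)).trans ?_
      obtain ⟨d, hd⟩ := Nat.exists_eq_add_of_le (show i + a ≤ i + j + b by omega)
      have h1 := LogConcave.ratio hq hlc (i + a) d
      rw [← hd] at h1
      have := hq (i + a)
      have h3 := hq (i + a + 1)
      rw [← add_assoc]
      by_contra! h2
      nlinarith [hq (i+j+b), hq (i+j+b+1)]
  exact absurd hcon.1 (not_lt.2 (hmono j le_rfl))

lemma LogConcave.min_mul_le (hq : ∀ i, 0 < q i) (hlc : ∀ i, q i * q (i + 2) ≤ q (i + 1) ^ 2)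
    (hs : ∀ s : Finset ℕ, ∑ i ∈ s, q i ≤ 1) (i k : ℕ) :
    min (q i) (q (i + k)) * (k + 1) ≤ 1 := by
  refine le_trans ?_ (hs (Finset.Icc i (i + k)))
  have h1 : (Finset.Icc i (i+k)).card • min (q i) (q (i + k)) ≤ ∑ j ∈ Finset.Icc i (i+k), q j := by
    apply Finset.card_nsmul_le_sum
    intro j hj
    obtain ⟨h1, h2⟩ := Finset.mem_Icc.1 hj
    obtain ⟨d, rfl⟩ := Nat.exists_eq_add_of_le h1
    obtain ⟨e, he⟩ := Nat.exists_eq_add_of_le h2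
    rw [he]
    exact LogConcave.min_le hq hlc i d e
  rw [Nat.card_Icc, nsmul_eq_mul] at h1
  have e : i + k + 1 - i = k + 1 := by omega
  rw [e] at h1
  push_cast at h1
  linarith

/-- A log-concave probability sequence decays geometrically, at scale `2 / a`, away from any index
whose weight is at least `a`. -/
lemma LogConcave.geometric (hq : ∀ i, 0 < q i) (hlc : ∀ i, q i * q (i + 2) ≤ q (i + 1) ^ 2)
    (hs : ∀ s : Finset ℕ, ∑ i ∈ s, q i ≤ 1) {a : ℝ} {m k : ℕ} (ha : 0 < a) (hm : a ≤ q m)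
    (hk : 2 ≤ a * (k + 1)) :
    (∀ d, q (m + d) * 2 ^ (d / k) ≤ 1) ∧ ∀ i d, i + d = m → q i * 2 ^ (d / k) ≤ 1 := by
  have hq1 : ∀ i, q i ≤ 1 := fun i => by simpa using hs {i}
  have hk1 : (0:ℝ) < k + 1 := by positivity
  have hhalf : ∀ i, min (q i) (q (i+k)) ≤ a / 2 := by
    intro i
    have := LogConcave.min_mul_le hq hlc hs i k
    rw [← le_div_iff₀ hk1] at this
    refine this.trans ?_
    rw [div_le_iff₀ hk1]
    linarith
  have hmp := hq m
  constructor
  · have hstep : ∀ s, q (m + s * k) * 2 ^ s ≤ q m := by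
      intro s
      induction s with
      | zero => simp
      | succ s ih =>
        have h1 := LogConcave.shift hq hlc m (s * k) k
        have h2 : q (m + k) ≤ q m / 2 := by
          rcases min_le_iff.1 (hhalf m) with h | h <;> linarith
        have h3 := hq (m + s * k)
        have h4 : q (m + s * k + k) ≤ q (m + s * k) / 2 := by
          refine le_of_mul_le_mul_right ?_ hmp
          refine h1.trans ?_
          nlinarith
        rw [show m + (s+1) * k = m + s * k + k by ring, pow_succ]
        have : (0:ℝ) < 2 ^ s := by positivity
        nlinarith
    intro d
    set s := d / k
    have hd : d = s * k + d % k := by rw [mul_comm]; exact (Nat.div_add_mod d k).symm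
    have h1 := LogConcave.shift hq hlc m (d % k) (s * k)
    rw [show m + d % k + s * k = m + d by omega] at h1
    have h2 := hstep s
    have h3 := hq1 (m + d % k)
    have h4 := hq (m + d % k)
    have hp : (0:ℝ) < 2 ^ s := by positivity
    refine le_of_mul_le_mul_right ?_ hmp
    calc q (m + d) * 2 ^ s * q m = q (m + d) * q m * 2 ^ s := by ring
      _ ≤ q (m + s * k) * q (m + d % k) * 2 ^ s := by gcongr
      _ = q (m + s * k) * 2 ^ s * q (m + d % k) := by ring
      _ ≤ q m * 1 := by gcongr
      _ = _ := by ring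
  · have hstep : ∀ s i, i + s * k = m → q i * 2 ^ s ≤ q m := by
      intro s
      induction s with
      | zero => intro i hi; simp at hi; simp [hi]
      | succ s ih =>
        intro i hi
        have h0 := ih (i + k) (by rw [← hi]; ring)
        have h1 := LogConcave.shift hq hlc i (s * k) k
        rw [show i + s * k + k = m by rw [← hi]; ring] at h1
        have h2 : q (i + s * k) ≤ q m / 2 := by
          have := hhalf (i + s * k)
          rw [show i + s * k + k = m by rw [← hi]; ring] at this
          rcases min_le_iff.1 this with h | h <;> linarith
        have h3 := hq (i + k)
        have h4 : q i ≤ q (i + k) / 2 := by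
          refine le_of_mul_le_mul_left ?_ hmp
          refine h1.trans ?_
          nlinarith
        rw [pow_succ]
        have : (0:ℝ) < 2 ^ s := by positivity
        nlinarith
    intro i d hi
    set s := d / k
    have hd : d = s * k + d % k := by rw [mul_comm]; exact (Nat.div_add_mod d k).symm
    have h1 := LogConcave.shift hq hlc i (d % k) (s * k)
    rw [show i + d % k + s * k = m by omega] at h1
    have h2 := hstep s (i + d % k) (by omega)
    have h3 := hq1 (i + s * k)
    have h4 := hq (i + s * k)
    have h5 := hq (i + d % k)
    have hp : (0:ℝ) < 2 ^ s := by positivity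
    refine le_of_mul_le_mul_left ?_ hmp
    calc q m * (q i * 2 ^ s) = q m * q i * 2 ^ s := by ring
      _ ≤ q (i + s * k) * q (i + d % k) * 2 ^ s := by gcongr
      _ = q (i + s * k) * (q (i + d % k) * 2 ^ s) := by ring
      _ ≤ 1 * q m := by gcongr
      _ = _ := by ring

end LogConcave

lemma exists_pow_le_two_pow : ∃ C : ℝ, 0 < C ∧ ∀ s : ℕ, ((s:ℝ) + 1) ^ 72 ≤ C * 2 ^ s := by
  obtain ⟨C, hC⟩ := (tendsto_pow_const_div_const_pow_of_one_lt 72 (one_lt_two : (1:ℝ) < 2)).bddAbove_range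
  refine ⟨2 * max C 1, by positivity, fun s => ?_⟩
  have h1 : ((s+1 : ℕ):ℝ) ^ 72 / 2 ^ (s+1) ≤ C := hC ⟨s+1, rfl⟩
  rw [div_le_iff₀ (by positivity)] at h1
  push_cast at h1
  have := le_max_left C 1
  have h2 : (0:ℝ) < 2 ^ s := by positivity
  rw [pow_succ (2:ℝ)] at h1
  refine h1.trans ?_
  nlinarith

namespace BalancedSeries

variable {β : ℝ} {c : ℕ → ℝ} {f : ℝ → ℝ}

/-- The moments `∫ x ^ n / f` equal `1 / c n` up to the factor `1 - β ≤ 1` at `n = 0`, and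
Cauchy–Schwarz makes them log-convex. -/
lemma coeff_logConcave (h : BalancedSeries β c f) (n : ℕ) : c n * c (n + 2) ≤ c (n + 1) ^ 2 := by
  have h0 := h.pos n
  have h1 := h.pos (n+1)
  have h2 := h.pos (n+2)
  set s := c n / c (n+1) with hs
  have hi : ∫ x in Ioi (0:ℝ), (weight c f (n+2) x / c (n+2) - 2 * s * (weight c f (n+1) x / c (n+1))
      + s ^ 2 * (weight c f n x / c n)) = 1 / c (n+2) - 2 * s * (1 / c (n+1))
        + s ^ 2 * ((1 - if n = 0 then β else 0) / c n) := by
    rw [integral_add, integral_sub, integral_const_mul, integral_const_mul, integral_div,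
      integral_div, integral_div, h.integral_weight, h.integral_weight, h.integral_weight]
    · simp
    · exact (h.integrable _).div_const _
    · exact ((h.integrable _).div_const _).const_mul _
    · exact ((h.integrable _).div_const _).sub (((h.integrable _).div_const _).const_mul _)
    · exact ((h.integrable _).div_const _).const_mul _
  have hp : 0 ≤ ∫ x in Ioi (0:ℝ), (weight c f (n+2) x / c (n+2) - 2 * s * (weight c f (n+1) x / c (n+1))
      + s ^ 2 * (weight c f n x / c n)) := by
    refine setIntegral_nonneg measurableSet_Ioi fun x hx => ?_
    have hx' : 0 < x := hx
    have hf := h.f_pos hx'.le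
    have e : weight c f (n+2) x / c (n+2) - 2 * s * (weight c f (n+1) x / c (n+1))
      + s ^ 2 * (weight c f n x / c n) = x ^ n / f x * (x - s) ^ 2 := by
      unfold weight
      field_simp
      ring
    rw [e]
    positivity
  rw [hi] at hp
  have hw : s ^ 2 * ((1 - if n = 0 then β else 0) / c n) ≤ s ^ 2 * (1 / c n) := by
    have hβ0 := h.hβ0
    gcongr
    split_ifs <;> linarith
  have h3 : 0 ≤ 1 / c (n+2) - 2 * s * (1 / c (n+1)) + s ^ 2 * (1 / c n) := by linarith
  have e : 1 / c (n+2) - 2 * s * (1 / c (n+1)) + s ^ 2 * (1 / c n)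
      = (c (n+1) ^ 2 - c n * c (n+2)) / (c (n+2) * c (n+1) ^ 2) := by
    rw [hs]; field_simp; ring
  rw [e] at h3
  have hd : 0 < c (n+2) * c (n+1)^2 := by positivity
  rw [le_div_iff₀ hd] at h3
  linarith

lemma weight_logConcave (h : BalancedSeries β c f) {x : ℝ} (hx : 0 < x) (n : ℕ) :
    weight c f n x * weight c f (n + 2) x ≤ weight c f (n + 1) x ^ 2 := by
  have hf := h.f_pos hx.le
  unfold weight
  rw [div_mul_div_comm, div_pow, ← sq]
  gcongr
  calc c n * x ^ n * (c (n+2) * x ^ (n+2)) = c n * c (n+2) * (x ^ (n+1)) ^ 2 := by ring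
    _ ≤ c (n+1) ^ 2 * (x ^ (n+1)) ^ 2 := by gcongr; exact h.coeff_logConcave n
    _ = _ := by ring

lemma sum_weight_le_one (h : BalancedSeries β c f) {x : ℝ} (hx : 0 ≤ x) (s : Finset ℕ) :
    ∑ i ∈ s, weight c f i x ≤ 1 :=
  sum_le_hasSum s (fun i _ => h.weight_nonneg hx i) (h.hasSum_weight hx)

/-- Concentration at scale `x ^ (1/2)`, with `x = R ^ 10`, around some index `m`. The exponential
decay supplied by log-concavity is recorded as a bound with the power `72`. -/
lemma exists_center (h : BalancedSeries β c f) :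
    ∃ κ C : ℝ, 0 < κ ∧ κ ≤ 1 ∧ 0 < C ∧ ∀ R : ℝ, 1 ≤ R → ∃ m : ℕ, κ / R ^ 5 ≤ weight c f m (R ^ 10) ∧
      ∀ i : ℕ, weight c f i (R ^ 10) * |(i:ℝ) - m| ^ 72 ≤ C * R ^ 360 := by
  obtain ⟨κ, hκ0, hκ1, hκ⟩ := h.exists_weight_ge
  obtain ⟨C, hC, hC2⟩ := exists_pow_le_two_pow
  refine ⟨κ, C * (3 / κ) ^ 72, hκ0, hκ1, by positivity, fun R hR => ?_⟩
  have hR0 : 0 < R := by linarith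
  have hx0 : 0 < R ^ 10 := by positivity
  obtain ⟨m, hm⟩ := hκ (R ^ 10) (one_le_pow₀ hR)
  have hsq : √(R ^ 10) = R ^ 5 := by
    rw [show R ^ 10 = (R ^ 5) ^ 2 by ring]; exact Real.sqrt_sq (by positivity)
  rw [hsq] at hm
  refine ⟨m, hm, ?_⟩
  have hR5 : 1 ≤ R ^ 5 := one_le_pow₀ hR
  set a := κ / R ^ 5 with ha
  have ha0 : 0 < a := by positivity
  have ha1 : a ≤ 1 := by rw [ha, div_le_iff₀ (by positivity)]; linarith
  set k := ⌈2 / a⌉₊ with hk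
  have hk1 : 2 / a ≤ k := Nat.le_ceil _
  have hk2 : (k:ℝ) ≤ 3 / a := by
    have h1 := (Nat.ceil_lt_add_one (show 0 ≤ 2 / a by positivity)).le
    have h2 : 1 ≤ 1 / a := by rw [le_div_iff₀ ha0]; linarith
    have : 3 / a = 2 / a + 1 / a := by ring
    linarith
  have hk0 : 0 < k := Nat.ceil_pos.2 (by positivity)
  rw [div_le_iff₀ ha0] at hk1
  obtain ⟨g1, g2⟩ := LogConcave.geometric (fun i => h.weight_pos hx0 i)
    (fun i => h.weight_logConcave hx0 i) (fun s => h.sum_weight_le_one hx0.le s) (k := k) ha0 hm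
    (by nlinarith)
  have hpoly : ∀ (p : ℝ) (d : ℕ), 0 ≤ p → p * 2 ^ (d / k) ≤ 1 →
      p * (d:ℝ) ^ 72 ≤ C * (3 / κ) ^ 72 * R ^ 360 := by
    intro p d hp hpd
    have h1 : (d:ℝ) ≤ k * ((d / k : ℕ) + 1) := by
      have := Nat.lt_mul_div_succ d hk0
      exact_mod_cast this.le
    have e : 3 / a = 3 / κ * R ^ 5 := by rw [ha]; field_simp
    calc p * (d:ℝ) ^ 72 ≤ p * (k * ((d / k : ℕ) + 1)) ^ 72 := by gcongr
      _ = p * ((d / k : ℕ) + 1) ^ 72 * (k:ℝ) ^ 72 := by rw [mul_pow]; ring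
      _ ≤ p * (C * 2 ^ (d / k)) * (3 / a) ^ 72 := by
          gcongr
          exact hC2 _
      _ = C * (p * 2 ^ (d / k)) * (3 / a) ^ 72 := by ring
      _ ≤ C * 1 * (3 / a) ^ 72 := by gcongr
      _ = _ := by rw [e, mul_pow]; ring
  intro i
  rcases le_total m i with hmi | hmi
  · obtain ⟨d, rfl⟩ := Nat.exists_eq_add_of_le hmi
    have := hpoly _ d (h.weight_nonneg hx0.le _) (g1 d)
    push_cast
    rwa [add_sub_cancel_left, abs_of_nonneg (by positivity)]
  · obtain ⟨d, rfl⟩ := Nat.exists_eq_add_of_le hmi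
    have := hpoly _ d (h.weight_nonneg hx0.le _) (g2 i d rfl)
    push_cast
    rwa [sub_add_cancel_left, abs_neg, abs_of_nonneg (by positivity)]

end BalancedSeries

/-! ### Concentration of the weights near the index `x` -/

lemma exists_invSq_bound : ∃ S : ℝ, 0 < S ∧ (∀ n : ℕ, ∑ j ∈ Finset.range n, 1 / ((j:ℝ) + 1) ^ 2 ≤ S) ∧
    Summable (fun j : ℕ => 1 / ((j:ℝ) + 1) ^ 2) ∧ ∑' j : ℕ, 1 / ((j:ℝ) + 1) ^ 2 ≤ S := by
  have hs : Summable (fun j : ℕ => 1 / ((j:ℝ) + 1) ^ 2) := by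
    have := (summable_nat_add_iff 1).2 (Real.summable_one_div_nat_pow.2 (one_lt_two))
    simpa using this
  refine ⟨∑' j : ℕ, 1 / ((j:ℝ) + 1) ^ 2, ?_, ?_, hs, le_rfl⟩
  · exact hs.tsum_pos (fun j => by positivity) 0 (by norm_num)
  · intro n
    exact hs.sum_le_tsum _ fun j _ => by positivity

namespace BalancedSeries

variable {β : ℝ} {c : ℕ → ℝ} {f : ℝ → ℝ}

/-- The centre is within `R ^ 6 / 2` of `x = R ^ 10`, because the integral of `cdf c f n` is
`n - β`, while `cdf c f n` is close to `1` before its centre and close to `0` after it. -/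
lemma exists_center_near (h : BalancedSeries β c f) :
    ∃ C R₀ : ℝ, 0 < C ∧ 1 ≤ R₀ ∧ ∀ R : ℝ, R₀ ≤ R → ∃ m : ℕ, |(m:ℝ) - R ^ 10| ≤ R ^ 6 / 2 ∧
      ∀ i : ℕ, weight c f i (R ^ 10) * |(i:ℝ) - m| ^ 72 ≤ C * R ^ 360 := by
  obtain ⟨κ, C, hκ0, hκ1, hC, hm⟩ := h.exists_center
  obtain ⟨S, hS0, hS1, hS2, hS3⟩ := exists_invSq_bound
  have hβ0 := h.hβ0
  have hβ1 := h.hβ1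
  set K := C * 8 ^ 70 * S with hK
  have hK0 : 0 < K := by positivity
  have hKκ : K ≤ K / κ := by rw [le_div_iff₀ hκ0]; nlinarith
  refine ⟨C, 4 * (K / κ + 3), hC, by linarith, fun R hR => ?_⟩
  have hR1 : 1 ≤ R := by linarith
  have hR0 : 0 < R := by linarith
  have hR6 : 4 * (K / κ + 3) ≤ R ^ 6 := hR.trans (le_self_pow₀ hR1 (by norm_num))
  obtain ⟨m, hm1, hm2⟩ := hm R hR1
  refine ⟨m, ?_, hm2⟩
  set x := R ^ 10 with hx
  have hx0 : 0 < x := by positivity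
  set d := ⌈R ^ 6 / 8⌉₊ with hd
  have hd1 : R ^ 6 / 8 ≤ d := Nat.le_ceil _
  have hd2 : (d:ℝ) ≤ R ^ 6 / 8 + 1 := (Nat.ceil_lt_add_one (by positivity)).le
  have hdr : (1:ℝ) < d := by linarith
  have hd3 : 2 ≤ d := by exact_mod_cast hdr
  have hB : K / R ^ 60 = C * 8 ^ 70 / R ^ 60 * S := by rw [hK]; ring
  have hpt : ∀ i : ℕ, ∀ j : ℝ, 0 < j → j ≤ |(i:ℝ) - m| → (d:ℝ) ≤ |(i:ℝ) - m| →
      weight c f i x ≤ C * 8 ^ 70 / R ^ 60 * (1 / j ^ 2) := by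
    intro i j hj hji hdi
    have h1 := hm2 i
    have h2 : (R ^ 6 / 8) ^ 70 * j ^ 2 ≤ |(i:ℝ) - m| ^ 72 := by
      calc (R ^ 6 / 8) ^ 70 * j ^ 2 ≤ |(i:ℝ) - m| ^ 70 * |(i:ℝ) - m| ^ 2 := by
            gcongr; linarith
        _ = _ := by ring
    have h3 : weight c f i x * ((R ^ 6 / 8) ^ 70 * j ^ 2) ≤ C * R ^ 360 :=
      le_trans (mul_le_mul_of_nonneg_left h2 (h.weight_nonneg hx0.le i)) h1
    rw [← le_div_iff₀ (by positivity)] at h3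
    refine h3.trans (le_of_eq ?_)
    field_simp
  have hup : 1 - cdf c f (m + d) x ≤ K / R ^ 60 := by
    have h1 := h.hasSum_tail hx0.le (m + d)
    rw [← h1.tsum_eq, hB]
    refine le_trans (Summable.tsum_le_tsum (fun i => ?_) h1.summable (hS2.mul_left (C * 8 ^ 70 / R ^ 60))) ?_
    · have e : |((i + (m + d) : ℕ):ℝ) - m| = i + d := by
        push_cast
        rw [abs_of_nonneg (by linarith [show (0:ℝ) ≤ i by positivity])]
        ring
      apply hpt
      · positivity
      · rw [e]; linarith
      · rw [e]; linarith [show (0:ℝ) ≤ i by positivity]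
    · rw [tsum_mul_left]
      gcongr
  have hlow : ∀ n, n + d = m → cdf c f n x ≤ K / R ^ 60 := by
    intro n hn
    unfold cdf
    rw [← Finset.sum_range_reflect, hB]
    refine le_trans (Finset.sum_le_sum (g := fun j : ℕ => C * 8 ^ 70 / R ^ 60 * (1 / ((j:ℝ)+1)^2)) fun j hj => ?_) ?_
    · have hj' := Finset.mem_range.1 hj
      have hc : ((n - 1 - j : ℕ) : ℝ) + 1 + j = n := by exact_mod_cast (by omega : n - 1 - j + 1 + j = n)
      have hn' : (n:ℝ) + d = m := by exact_mod_cast hn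
      have e : |((n - 1 - j : ℕ) : ℝ) - m| = d + 1 + j := by
        rw [abs_sub_comm, abs_of_nonneg (by linarith [show (0:ℝ) ≤ j by positivity])]
        linarith
      apply hpt
      · positivity
      · rw [e]; linarith
      · rw [e]; linarith [show (0:ℝ) ≤ j by positivity]
    · rw [← Finset.mul_sum]
      gcongr
      exact hS1 n
  have hR60 : 0 < R ^ 60 := by positivity
  have hxB : x * (K / R ^ 60) ≤ K := by
    have e : x * (K / R ^ 60) = K / R ^ 50 := by rw [hx]; field_simp
    rw [e]
    exact div_le_self hK0.le (one_le_pow₀ hR1)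
  rw [abs_le]
  constructor
  -- `cdf c f (m + d)` is almost `1` on `(0, x]`, and its integral is `m + d - β`
  · obtain ⟨n, hn⟩ := Nat.exists_eq_succ_of_ne_zero (show m + d ≠ 0 by omega)
    have h1 := h.integral_cdf n
    have h2 := h.integrable_cdf (n+1)
    rw [Nat.succ_eq_add_one] at hn
    rw [← hn] at h1 h2
    have h3 : ∫ t in Ioc 0 x, (1 - K / R ^ 60) ≤ ∫ t in Ioi (0:ℝ), cdf c f (m + d) t := by
      refine le_trans (setIntegral_mono_on (g := cdf c f (m+d)) (by simp) (h2.mono_set fun t ht => ht.1) measurableSet_Ioc ?_)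
        (setIntegral_mono_set h2 ?_ (Filter.Eventually.of_forall fun t ht => ht.1))
      · intro t ht
        have := h.cdf_antitone ht.1 ht.2 (m + d)
        linarith
      · filter_upwards [ae_restrict_mem measurableSet_Ioi] with t ht
        exact h.cdf_nonneg (le_of_lt ht) _
    rw [h1, setIntegral_const] at h3
    simp only [measureReal_def, Real.volume_Ioc, sub_zero, ENNReal.toReal_ofReal hx0.le, smul_eq_mul] at h3
    have : (n:ℝ) + 1 = m + d := by exact_mod_cast hn.symm
    nlinarith
  · rcases le_or_gt m d with hmd | hmd
    · have : (m:ℝ) ≤ d := by exact_mod_cast hmd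
      linarith
    obtain ⟨n, hn⟩ : ∃ n, n + 1 + d = m := ⟨m - d - 1, by omega⟩
    have h1 := h.integral_cdf n
    have h2 := h.integrable_cdf (n+1)
    have hpm := h.weight_pos hx0 m
    have hfx := h.f_pos hx0.le
    have hl := hlow (n+1) hn
    -- beyond `x` the tail of `cdf c f (m - d)` contributes `O(1)` to its integral `m - d - β`
    have hbd : ∀ t ∈ Ioi x, cdf c f (n+1) t ≤ K / κ / R ^ 55 * (x / t) ^ d := by
      intro t ht
      have hxt : x < t := ht
      have ht0 : 0 < t := hx0.trans hxt
      have hft := h.f_pos ht0.le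
      have hq : 1 ≤ t / x := by rw [le_div_iff₀ hx0, one_mul]; exact hxt.le
      have h3 : weight c f m x * (t / x) ^ m ≤ f t / f x :=
        le_hasSum (h.hasSum_ratio hx0 ht0) m fun i _ => mul_nonneg (h.weight_nonneg hx0.le i) (by positivity)
      have h4 : cdf c f (n+1) t ≤ cdf c f (n+1) x * (t/x) ^ (n+1) * (f x / f t) := by
        unfold cdf
        rw [Finset.sum_mul, Finset.sum_mul]
        apply Finset.sum_le_sum
        intro i hi
        have := Finset.mem_range.1 hi
        rw [h.weight_eq hx0 ht0 i]
        have := h.weight_nonneg hx0.le i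
        gcongr
      have h5 : f x / f t ≤ 1 / (κ / R ^ 5 * (t / x) ^ m) := by
        rw [div_le_div_iff₀ hft (by positivity)]
        rw [le_div_iff₀ hfx] at h3
        have : κ / R ^ 5 * (t / x) ^ m * f x ≤ weight c f m x * (t / x) ^ m * f x := by gcongr
        linarith
      have hq0 : 0 < t / x := by linarith
      calc cdf c f (n+1) t ≤ cdf c f (n+1) x * (t/x) ^ (n+1) * (f x / f t) := h4
        _ ≤ K / R ^ 60 * (t/x) ^ (n+1) * (1 / (κ / R ^ 5 * (t / x) ^ m)) := by
            gcongr
        _ = K / κ / R ^ 55 * (x / t) ^ d := by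
            rw [show x / t = (t / x)⁻¹ by rw [inv_div], inv_pow, ← hn, pow_add _ _ d]
            generalize t / x = q at hq0
            field_simp
    obtain ⟨j, hj⟩ : ∃ j, d = j + 2 := ⟨d - 2, by omega⟩
    have hsplit : ∫ t in Ioi (0:ℝ), cdf c f (n+1) t
        = (∫ t in Ioc 0 x, cdf c f (n+1) t) + ∫ t in Ioi x, cdf c f (n+1) t := by
      rw [← setIntegral_union]
      · rw [Ioc_union_Ioi_eq_Ioi hx0.le]
      · exact Set.disjoint_left.2 fun t h1 h2 => not_lt.2 h1.2 h2
      · exact measurableSet_Ioi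
      · exact h2.mono_set (fun t ht => ht.1)
      · exact h2.mono_set (fun t ht => hx0.trans ht)
    have i1 : ∫ t in Ioi x, cdf c f (n+1) t ≤ K / κ / R ^ 55 * (x / (j + 1)) := by
      rw [← integral_div_pow hx0, ← integral_const_mul]
      refine setIntegral_mono_on (h2.mono_set (fun t ht => hx0.trans ht))
        ((integrableOn_div_pow hx0 j).const_mul _) measurableSet_Ioi ?_
      rw [← hj]
      exact hbd
    have i2 : ∫ t in Ioc 0 x, cdf c f (n+1) t ≤ ∫ t in Ioc 0 x, (1:ℝ) := by
      refine setIntegral_mono_on (h2.mono_set (fun t ht => ht.1)) (by simp)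
            measurableSet_Ioc fun t ht => h.cdf_le_one ht.1.le _
    rw [setIntegral_const] at i2
    simp only [measureReal_def, Real.volume_Ioc, sub_zero, ENNReal.toReal_ofReal hx0.le, smul_eq_mul, mul_one] at i2
    have i3 : K / κ / R ^ 55 * (x / (j + 1)) ≤ K / κ := by
      have : x / (j + 1 : ℝ) ≤ x := div_le_self hx0.le (by linarith [show (0:ℝ) ≤ j by positivity])
      calc _ ≤ K / κ / R ^ 55 * x := by gcongr
        _ ≤ K / κ := by
          rw [hx, show R ^ 55 = R ^ 10 * R ^ 45 by ring]
          rw [div_mul_eq_mul_div, div_le_iff₀ (by positivity)]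
          gcongr
          nlinarith [one_le_pow₀ hR1 (n := 45), show 0 < R ^ 10 by positivity]
    have : (n:ℝ) + 1 + d = m := by exact_mod_cast hn
    linarith

/-- Concentration: `weight c f i x` is tiny as soon as `|i - x| ≥ x ^ (3/5)`, a condition written
here with integer powers. -/
lemma concentration (h : BalancedSeries β c f) :
    ∃ C x₀ : ℝ, 0 < C ∧ 1 ≤ x₀ ∧ ∀ x : ℝ, x₀ ≤ x → ∀ i : ℕ, x ^ 3 ≤ |(i:ℝ) - x| ^ 5 →
      weight c f i x * |(i:ℝ) - x| ≤ C / x ^ 4 * (1 / ((i:ℝ) + 1) ^ 2) := by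
  obtain ⟨C, R₀, hC, hR₀, hm⟩ := h.exists_center_near
  refine ⟨9 * (C * 2 ^ 72), R₀ ^ 10, by positivity, one_le_pow₀ hR₀, fun x hx i hi => ?_⟩
  have hx1 : 1 ≤ x := (one_le_pow₀ hR₀).trans hx
  have hx0 : 0 < x := by linarith
  obtain ⟨R, hR0, hRx⟩ : ∃ R : ℝ, 0 ≤ R ∧ R ^ 10 = x :=
    ⟨x ^ (1 / (10:ℕ) : ℝ), by positivity, by rw [one_div]; exact Real.rpow_inv_natCast_pow hx0.le (by norm_num)⟩
  have hR : R₀ ≤ R := by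
    rw [← hRx] at hx
    exact le_of_pow_le_pow_left₀ (by norm_num) hR0 hx
  obtain ⟨m, hm1, hm2⟩ := hm R hR
  rw [hRx] at hm1 hm2
  have hR1 := hR₀.trans hR
  set z := |(i:ℝ) - x| with hz
  have hz0 : 0 ≤ z := abs_nonneg _
  have hz6 : R ^ 6 ≤ z := by
    rw [← hRx, show (R ^ 10) ^ 3 = (R ^ 6) ^ 5 by ring] at hi
    exact le_of_pow_le_pow_left₀ (by norm_num) hz0 hi
  have hz1 : 1 ≤ z := (one_le_pow₀ hR1).trans hz6
  have him : z / 2 ≤ |(i:ℝ) - m| := by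
    have := abs_sub_le (i:ℝ) m x
    linarith
  have hp := h.weight_nonneg hx0.le i
  have h1 : weight c f i x * z ^ 12 ≤ C * 2 ^ 72 := by
    have : weight c f i x * (z / 2) ^ 72 ≤ C * R ^ 360 :=
      le_trans (by gcongr) (hm2 i)
    have h3 : R ^ 360 ≤ z ^ 60 := by
      calc R ^ 360 = (R ^ 6) ^ 60 := by ring
        _ ≤ z ^ 60 := by gcongr
    refine le_of_mul_le_mul_right ?_ (show 0 < z ^ 60 by positivity)
    calc weight c f i x * z ^ 12 * z ^ 60 = 2 ^ 72 * (weight c f i x * (z / 2) ^ 72) := by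
          rw [div_pow]; ring
      _ ≤ 2 ^ 72 * (C * R ^ 360) := by gcongr
      _ ≤ 2 ^ 72 * (C * z ^ 60) := by gcongr
      _ = _ := by ring
  have hxz : x ≤ z ^ 2 := by
    calc x = R ^ 10 := hRx.symm
      _ ≤ R ^ 12 := pow_le_pow_right₀ hR1 (by norm_num)
      _ = (R ^ 6) ^ 2 := by ring
      _ ≤ z ^ 2 := by gcongr
  have hx4 : x ^ 4 ≤ z ^ 7 := by
    calc x ^ 4 = R ^ 40 := by rw [← hRx]; ring
      _ ≤ R ^ 42 := pow_le_pow_right₀ hR1 (by norm_num)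
      _ = (R ^ 6) ^ 7 := by ring
      _ ≤ z ^ 7 := by gcongr
  have hi3 : (i:ℝ) + 1 ≤ 3 * z ^ 2 := by
    have := le_abs_self ((i:ℝ) - x)
    nlinarith
  rw [div_mul_div_comm, mul_one, le_div_iff₀ (by positivity)]
  calc weight c f i x * z * (x ^ 4 * ((i:ℝ) + 1) ^ 2) ≤ weight c f i x * z * (z ^ 7 * (3 * z ^ 2) ^ 2) := by gcongr
    _ = 9 * (weight c f i x * z ^ 12) := by ring
    _ ≤ _ := by gcongr

end BalancedSeries

/-! ### The mean index and regularity in `x` -/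

namespace BalancedSeries

variable {β : ℝ} {c : ℕ → ℝ} {f : ℝ → ℝ}

/-- The indices outside the window `|i - x| < x ^ (3/5)` carry a first absolute moment of order at
most `x ^ (-4)`. -/
lemma far_moment (h : BalancedSeries β c f) :
    ∃ C x₀ : ℝ, 0 < C ∧ 1 ≤ x₀ ∧ ∀ x : ℝ, x₀ ≤ x →
      Summable (fun i : ℕ => weight c f i x * |(i:ℝ) - x|) ∧
      ∀ s : Set ℕ, (∀ i ∈ s, x ^ 3 ≤ |(i:ℝ) - x| ^ 5) →
        ∑' i, s.indicator (fun i : ℕ => weight c f i x * |(i:ℝ) - x|) i ≤ C / x ^ 4 := by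
  obtain ⟨C, x₀, hC, hx₀, hconc⟩ := h.concentration
  obtain ⟨S, hS0, hS1, hS2, hS3⟩ := exists_invSq_bound
  refine ⟨C * S, x₀, by positivity, hx₀, fun x hx => ?_⟩
  have hx0 : 0 < x := by linarith
  have hx1 : 1 ≤ x := by linarith
  have hbs := hS2.mul_left (C / x ^ 4)
  have hnn : ∀ i : ℕ, 0 ≤ weight c f i x * |(i:ℝ) - x| := fun i =>
    mul_nonneg (h.weight_nonneg hx0.le i) (abs_nonneg _)
  constructor
  · refine Summable.of_nonneg_of_le hnn (fun i => ?_)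
      (hbs.add ((h.hasSum_weight hx0.le).summable.mul_right x))
    have h2 := h.weight_nonneg hx0.le i
    rcases le_or_gt (x ^ 3) (|(i:ℝ) - x| ^ 5) with hfar | hnear
    · have := hconc x hx i hfar
      have : 0 ≤ weight c f i x * x := by positivity
      linarith
    · have h1 : |(i:ℝ) - x| ≤ x := by
        refine le_of_pow_le_pow_left₀ (n := 5) (by norm_num) hx0.le (hnear.le.trans ?_)
        exact pow_le_pow_right₀ hx1 (by norm_num)
      have : 0 ≤ C / x ^ 4 * (1 / ((i:ℝ) + 1) ^ 2) := by positivity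
      have : weight c f i x * |(i:ℝ) - x| ≤ weight c f i x * x := by gcongr
      linarith
  · intro s hs
    have hle : ∀ i, s.indicator (fun i : ℕ => weight c f i x * |(i:ℝ) - x|) i
        ≤ C / x ^ 4 * (1 / ((i:ℝ) + 1) ^ 2) := by
      intro i
      by_cases his : i ∈ s
      · rw [indicator_of_mem his]
        exact hconc x hx i (hs i his)
      · rw [indicator_of_notMem his]
        positivity
    have hsum : Summable (s.indicator (fun i : ℕ => weight c f i x * |(i:ℝ) - x|)) :=
      Summable.of_nonneg_of_le (fun i => indicator_nonneg (fun i _ => hnn i) i) hle hbs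
    calc _ ≤ ∑' i : ℕ, C / x ^ 4 * (1 / ((i:ℝ) + 1) ^ 2) := hsum.tsum_le_tsum hle hbs
      _ = C / x ^ 4 * ∑' i : ℕ, (1 / ((i:ℝ) + 1) ^ 2) := tsum_mul_left
      _ ≤ C / x ^ 4 * S := by gcongr
      _ = _ := by ring

/-- The mean of the distribution `i ↦ weight c f i x`. -/
noncomputable def _root_.meanIndex (c : ℕ → ℝ) (f : ℝ → ℝ) (x : ℝ) : ℝ := ∑' i : ℕ, weight c f i x * i

lemma summable_mul_index (h : BalancedSeries β c f) {x : ℝ} (hx : 0 < x) :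
    Summable (fun i : ℕ => weight c f i x * i) := by
  have h1 := ((h.summable (2 * x)).abs).div_const (f x)
  have hf := h.f_pos hx.le
  refine Summable.of_nonneg_of_le (fun i => mul_nonneg (h.weight_nonneg hx.le i) (by positivity)) (fun i => ?_) h1
  have hc := h.pos i
  rw [abs_of_nonneg (by positivity)]
  unfold weight
  rw [div_mul_eq_mul_div, mul_pow]
  have : (i:ℝ) ≤ 2 ^ i := by exact_mod_cast Nat.lt_two_pow_self.le
  refine div_le_div_of_nonneg_right ?_ hf.le
  calc c i * x ^ i * i ≤ c i * x ^ i * 2 ^ i := by gcongr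
    _ = _ := by ring

lemma hasDerivAt (h : BalancedSeries β c f) {x : ℝ} (hx : 0 < x) :
    HasDerivAt f (f x * meanIndex c f x / x) x := by
  have hf := h.f_pos hx.le
  have hu : Summable (fun n : ℕ => c n * (n * (2 * x) ^ (n - 1))) := by
    have h1 := ((h.summable (2 * (2 * x))).div_const (2 * x))
    refine Summable.of_nonneg_of_le (fun n => ?_) (fun n => ?_) h1
    · have := h.pos n; positivity
    · have hc := h.pos n
      rw [mul_pow 2 (2 * x)]
      have : (n:ℝ) ≤ 2 ^ n := by exact_mod_cast Nat.lt_two_pow_self.le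
      rcases n with _ | n
      · simp; positivity
      · rw [le_div_iff₀ (by positivity)]
        simp only [Nat.add_sub_cancel]
        calc c (n+1) * (((n+1:ℕ):ℝ) * (2 * x) ^ n) * (2 * x) = c (n+1) * (((n+1:ℕ):ℝ) * (2 * x) ^ (n+1)) := by ring
          _ ≤ _ := by gcongr
  have hd := hasDerivAt_tsum_of_isPreconnected (𝕜 := ℝ) (F := ℝ) (g := fun n y => c n * y ^ n)
    (g' := fun n y => c n * (n * y ^ (n - 1))) hu (isOpen_Ioo (a := (-(2*x))) (b := 2 * x))
    isPreconnected_Ioo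
    (fun n y _ => (hasDerivAt_pow n y).const_mul (c n))
    (fun n y hy => by
      rw [norm_mul, norm_mul, norm_pow, Real.norm_of_nonneg (h.pos n).le, Real.norm_natCast]
      have := h.pos n
      have : ‖y‖ ≤ 2 * x := by rw [Real.norm_eq_abs, abs_le]; exact ⟨hy.1.le, hy.2.le⟩
      gcongr)
    (y₀ := x) ⟨by linarith, by linarith⟩ (h.summable x) (y := x) ⟨by linarith, by linarith⟩
  have e : f = fun z => ∑' n, c n * z ^ n := funext h.sum
  have e2 : f x * meanIndex c f x / x = ∑' n : ℕ, c n * (n * x ^ (n - 1)) := by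
    unfold meanIndex
    rw [← tsum_mul_left, ← tsum_div_const]
    congr 1
    ext n
    unfold weight
    rcases n with _ | n
    · simp
    · simp only [Nat.add_sub_cancel]
      field_simp
      ring
  rw [e2]
  rw [← e] at hd
  exact hd

lemma hasDerivAt_log (h : BalancedSeries β c f) {x : ℝ} (hx : 0 < x) :
    HasDerivAt (fun y => Real.log (f y)) (meanIndex c f x / x) x := by
  have hf := h.f_pos hx.le
  have := (h.hasDerivAt hx).log hf.ne'
  convert this using 1
  field_simp

lemma continuousOn (h : BalancedSeries β c f) : ContinuousOn f (Ioi 0) :=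
  fun _ hx => (h.hasDerivAt hx).continuousAt.continuousWithinAt

lemma continuousOn_weight (h : BalancedSeries β c f) (n : ℕ) : ContinuousOn (weight c f n) (Ioi 0) := by
  unfold weight
  refine ContinuousOn.div (by fun_prop) h.continuousOn fun x hx => (h.f_pos (le_of_lt hx)).ne'

lemma continuousOn_cdf (h : BalancedSeries β c f) (n : ℕ) : ContinuousOn (cdf c f n) (Ioi 0) := by
  unfold cdf
  exact continuousOn_finsetSum _ fun i _ => h.continuousOn_weight i

lemma integrable_mul_weight (h : BalancedSeries β c f) (n : ℕ) :
    IntegrableOn (fun x => x * weight c f n x) (Ioi 0) := by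
  have h1 := (h.integrable (n+1)).const_mul (c n / c (n+1))
  have e : (fun x => x * weight c f n x) = fun x => c n / c (n+1) * weight c f (n+1) x := by
    ext x
    have := h.pos (n+1)
    unfold weight
    field_simp
    ring
  rw [e]
  exact h1

lemma integrable_mul_cdf (h : BalancedSeries β c f) (n : ℕ) :
    IntegrableOn (fun x => x * cdf c f n x) (Ioi 0) := by
  unfold cdf
  simp only [Finset.mul_sum]
  exact integrable_finsetSum _ fun i _ => h.integrable_mul_weight i

end BalancedSeries

/-! ### Two solutions and their relative entropy -/

namespace BalancedSeries

variable {β : ℝ} {c d : ℕ → ℝ} {f g : ℝ → ℝ}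

lemma far_sum (h : BalancedSeries β c f) :
    ∃ C x₀ : ℝ, 0 < C ∧ 1 ≤ x₀ ∧ ∀ x : ℝ, x₀ ≤ x → ∀ n : ℕ,
      ((∀ i < n, x ^ 3 ≤ |(i:ℝ) - x| ^ 5) → cdf c f n x ≤ C / x ^ 4) ∧
      ((∀ i, n ≤ i → x ^ 3 ≤ |(i:ℝ) - x| ^ 5) → 1 - cdf c f n x ≤ C / x ^ 4) := by
  obtain ⟨C, x₀, hC, hx₀, hfar⟩ := h.far_moment
  refine ⟨C, x₀, hC, hx₀, fun x hx n => ?_⟩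
  have hx0 : 0 < x := by linarith
  have hx1 : 1 ≤ x := by linarith
  obtain ⟨hs, hb⟩ := hfar x hx
  have key : ∀ u : Finset ℕ, (∀ i ∈ u, x ^ 3 ≤ |(i:ℝ) - x| ^ 5) →
      ∑ i ∈ u, weight c f i x ≤ C / x ^ 4 := by
    intro u hu
    refine le_trans ?_ (hb u hu)
    refine le_trans (Finset.sum_le_sum (g := (u:Set ℕ).indicator (fun i : ℕ => weight c f i x * |(i:ℝ) - x|)) fun i hi => ?_)
      ((hs.indicator (u : Set ℕ)).sum_le_tsum u fun i _ => indicator_nonneg (fun i _ => mul_nonneg (h.weight_nonneg hx0.le i) (abs_nonneg _)) i)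
    rw [indicator_of_mem (by exact_mod_cast hi)]
    have h1 : 1 ≤ |(i:ℝ) - x| := by
      refine le_of_pow_le_pow_left₀ (n := 5) (by norm_num) (abs_nonneg _) ?_
      rw [one_pow]
      exact (one_le_pow₀ hx1).trans (hu i hi)
    exact le_mul_of_one_le_right (h.weight_nonneg hx0.le i) h1
  constructor
  · intro hi
    exact key _ fun i hin => hi i (Finset.mem_range.1 hin)
  · intro hi
    refine hasSum_le_of_sum_le (h.hasSum_tail hx0.le n) fun u => ?_
    have := key (u.map (addRightEmbedding n)) (fun i hiu => by
      obtain ⟨j, _, rfl⟩ := Finset.mem_map.1 hiu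
      exact hi _ (by simp))
    simpa using this

lemma mean_nonneg (h : BalancedSeries β c f) {x : ℝ} (hx : 0 < x) : 0 ≤ meanIndex c f x :=
  tsum_nonneg fun i => mul_nonneg (h.weight_nonneg hx.le i) (by positivity)

lemma mean_le (h : BalancedSeries β c f) :
    ∃ C x₀ : ℝ, 0 < C ∧ 1 ≤ x₀ ∧ ∀ x : ℝ, x₀ ≤ x → meanIndex c f x ≤ C * x := by
  obtain ⟨C, x₀, hC, hx₀, hfar⟩ := h.far_moment
  refine ⟨C + 2, x₀, by positivity, hx₀, fun x hx => ?_⟩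
  have hx0 : 0 < x := by linarith
  have hx1 : 1 ≤ x := by linarith
  obtain ⟨hs, hb⟩ := hfar x hx
  have hb := hb {i : ℕ | x ^ 3 ≤ |(i:ℝ) - x| ^ 5} (fun i hi => by simpa only [Set.mem_ofPred_eq] using hi)
  have hw := h.hasSum_weight hx0.le
  have hle : ∀ i : ℕ, weight c f i x * i ≤ {i : ℕ | x ^ 3 ≤ |(i:ℝ) - x| ^ 5}.indicator
      (fun i : ℕ => weight c f i x * |(i:ℝ) - x|) i + weight c f i x * (2 * x) := by
    intro i
    have h2 := h.weight_nonneg hx0.le i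
    have h3 := le_abs_self ((i:ℝ) - x)
    by_cases hi : x ^ 3 ≤ |(i:ℝ) - x| ^ 5
    · rw [indicator_of_mem (by exact hi)]
      nlinarith [mul_le_mul_of_nonneg_left h3 h2, mul_nonneg h2 hx0.le]
    · rw [indicator_of_notMem (by exact hi)]
      have h1 : |(i:ℝ) - x| ≤ x := by
        refine le_of_pow_le_pow_left₀ (n := 5) (by norm_num) hx0.le ((not_le.1 hi).le.trans ?_)
        exact pow_le_pow_right₀ hx1 (by norm_num)
      rw [zero_add]
      gcongr
      linarith
  have hS := (hs.indicator {i : ℕ | x ^ 3 ≤ |(i:ℝ) - x| ^ 5}).add (hw.summable.mul_right (2 * x))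
  have := (h.summable_mul_index hx0).tsum_le_tsum hle hS
  rw [(hs.indicator _).tsum_add (hw.summable.mul_right (2 * x)), tsum_mul_right, hw.tsum_eq] at this
  have h4 : C / x ^ 4 ≤ C := div_le_self hC.le (one_le_pow₀ hx1)
  unfold meanIndex
  nlinarith

/-- The logarithmic derivative of `f` is `meanIndex c f x / x`, which is bounded at infinity. -/
lemma log_bound (h : BalancedSeries β c f) :
    ∃ C : ℝ, 0 < C ∧ ∀ x : ℝ, 0 < x → |Real.log (f x)| ≤ C * (1 + x) := by
  obtain ⟨C, x₀, hC, hx₀, hmean⟩ := h.mean_le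
  have h00 : 0 < x₀ := by linarith
  have hmono : ∀ x y : ℝ, 0 ≤ x → x ≤ y → f x ≤ f y := by
    intro x y hx hxy
    rw [h.sum, h.sum]
    refine (h.summable x).tsum_le_tsum (fun i => ?_) (h.summable y)
    have := h.pos i
    gcongr
  have hlow : ∀ x : ℝ, 0 ≤ x → c 0 ≤ f x := by
    intro x hx
    have := (h.summable x).le_tsum 0 fun i _ => by have := h.pos i; positivity
    rw [h.sum]
    simpa using this
  have hc0 := h.pos 0
  set L := |Real.log (c 0)| + |Real.log (f x₀)| with hL
  have hL0 : 0 ≤ L := by positivity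
  refine ⟨C + L, by positivity, fun x hx => ?_⟩
  have hfx := h.f_pos hx.le
  rcases le_total x x₀ with hxx | hxx
  · have h1 : Real.log (c 0) ≤ Real.log (f x) := Real.log_le_log hc0 (hlow x hx.le)
    have h2 : Real.log (f x) ≤ Real.log (f x₀) := Real.log_le_log hfx (hmono x x₀ hx.le hxx)
    have h3 : |Real.log (f x)| ≤ L := by
      rw [abs_le]
      have := neg_abs_le (Real.log (c 0))
      have := le_abs_self (Real.log (f x₀))
      have := abs_nonneg (Real.log (c 0))
      have := abs_nonneg (Real.log (f x₀))
      constructor <;> linarith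
    nlinarith [mul_nonneg hL0 hx.le, mul_nonneg hC.le hx.le]
  · have h1 := (convex_Ici x₀).norm_image_sub_le_of_norm_hasDerivWithin_le
      (f := fun y => Real.log (f y)) (f' := fun y => meanIndex c f y / y) (C := C)
      (fun y hy => (h.hasDerivAt_log (h00.trans_le hy)).hasDerivWithinAt)
      (fun y hy => by
        have hy0 : 0 < y := h00.trans_le hy
        rw [Real.norm_of_nonneg (div_nonneg (h.mean_nonneg hy0) hy0.le), div_le_iff₀ hy0]
        exact hmean y hy) (x := x₀) (y := x) self_mem_Ici hxx
    simp only [Real.norm_eq_abs] at h1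
    rw [abs_of_nonneg (sub_nonneg.2 hxx)] at h1
    have h2 := abs_sub_abs_le_abs_sub (Real.log (f x)) (Real.log (f x₀))
    have h3 : |Real.log (f x₀)| ≤ L := by
      have := abs_nonneg (Real.log (c 0)); linarith
    nlinarith [mul_nonneg hL0 hx.le, mul_nonneg hC.le h00.le]

/-- The logarithm of the quotient of two solutions. -/
noncomputable def _root_.logRatio (f g : ℝ → ℝ) (x : ℝ) : ℝ := Real.log (g x) - Real.log (f x)

lemma logRatio_bound (h : BalancedSeries β c f) (h' : BalancedSeries β d g) :
    ∃ C : ℝ, 0 < C ∧ ∀ x : ℝ, 0 < x → |logRatio f g x| ≤ C * (1 + x) := by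
  obtain ⟨C, hC, hb⟩ := h.log_bound
  obtain ⟨C', hC', hb'⟩ := h'.log_bound
  refine ⟨C' + C, by positivity, fun x hx => ?_⟩
  have := abs_sub (Real.log (g x)) (Real.log (f x))
  have := hb x hx
  have := hb' x hx
  unfold logRatio
  linarith

lemma hasDerivAt_logRatio (h : BalancedSeries β c f) (h' : BalancedSeries β d g) {x : ℝ} (hx : 0 < x) :
    HasDerivAt (logRatio f g) ((meanIndex d g x - meanIndex c f x) / x) x := by
  rw [sub_div]
  exact (h'.hasDerivAt_log hx).sub (h.hasDerivAt_log hx)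

lemma continuousOn_logRatio (h : BalancedSeries β c f) (h' : BalancedSeries β d g) :
    ContinuousOn (logRatio f g) (Ioi 0) :=
  fun _ hx => (h.hasDerivAt_logRatio h' hx).continuousAt.continuousWithinAt

lemma integrable_logRatio_mul (h : BalancedSeries β c f) (h' : BalancedSeries β d g) {G : ℝ → ℝ}
    (hG : IntegrableOn G (Ioi 0)) (hG' : IntegrableOn (fun x => x * G x) (Ioi 0)) :
    IntegrableOn (fun x => logRatio f g x * G x) (Ioi 0) := by
  obtain ⟨C, hC, hb⟩ := h.logRatio_bound h'
  refine Integrable.mono' (g := fun x => C * (|G x| + |x * G x|)) ((hG.abs.add hG'.abs).const_mul C) ?_ ?_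
  · exact ((h.continuousOn_logRatio h').aestronglyMeasurable measurableSet_Ioi).mul hG.aestronglyMeasurable
  · filter_upwards [ae_restrict_mem measurableSet_Ioi] with x hx
    have hx0 : 0 < x := hx
    rw [norm_mul, Real.norm_eq_abs, Real.norm_eq_abs, abs_mul x, abs_of_pos hx0]
    have := hb x hx0
    calc |logRatio f g x| * |G x| ≤ C * (1 + x) * |G x| := by gcongr
      _ = _ := by ring

/-- The integrand of the symmetric relative entropy of the two distributions, term `i`. -/
noncomputable def _root_.localEnergy (c d : ℕ → ℝ) (f g : ℝ → ℝ) (i : ℕ) (x : ℝ) : ℝ :=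
  (weight d g i x - weight c f i x) * (Real.log (weight d g i x) - Real.log (weight c f i x))

/-- The integral of `localEnergy`. -/
noncomputable def _root_.energy (c d : ℕ → ℝ) (f g : ℝ → ℝ) (i : ℕ) : ℝ :=
  ∫ x in Ioi (0:ℝ), localEnergy c d f g i x

/-- A lower bound for the symmetric relative entropy by a weighted squared difference. -/
lemma sub_mul_log_ge {a b : ℝ} (ha : 0 < a) (hb : 0 < b) :
    (a - b) ^ 2 / (a + b) ≤ (a - b) * (Real.log a - Real.log b) := by
  wlog hab : b ≤ a generalizing a b
  · have := this hb ha (le_of_not_ge hab)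
    rw [add_comm b a] at this
    calc (a - b) ^ 2 / (a + b) = (b - a) ^ 2 / (a + b) := by rw [sub_sq_comm]
      _ ≤ _ := this
      _ = _ := by ring
  have h1 := Real.one_sub_inv_le_log_of_pos (show 0 < a / b by positivity)
  rw [Real.log_div ha.ne' hb.ne', inv_div] at h1
  have h2 : (a - b) / (a + b) ≤ 1 - b / a := by
    rw [show 1 - b / a = (a - b) / a by field_simp]
    gcongr
    · linarith
  rw [sq, mul_div_assoc]
  exact mul_le_mul_of_nonneg_left (h2.trans h1) (by linarith)

lemma localEnergy_ge (h : BalancedSeries β c f) (h' : BalancedSeries β d g) {x : ℝ} (hx : 0 < x) (i : ℕ) :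
    (weight d g i x - weight c f i x) ^ 2 / (weight d g i x + weight c f i x) ≤ localEnergy c d f g i x :=
  sub_mul_log_ge (h'.weight_pos hx i) (h.weight_pos hx i)

lemma localEnergy_nonneg (h : BalancedSeries β c f) (h' : BalancedSeries β d g) {x : ℝ} (hx : 0 < x) (i : ℕ) :
    0 ≤ localEnergy c d f g i x := by
  refine le_trans ?_ (h.localEnergy_ge h' hx i)
  have := h.weight_pos hx i
  have := h'.weight_pos hx i
  positivity

lemma localEnergy_eq (h : BalancedSeries β c f) (h' : BalancedSeries β d g) {x : ℝ} (hx : 0 < x) (i : ℕ) :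
    localEnergy c d f g i x = (Real.log (d i) - Real.log (c i)) * (weight d g i x - weight c f i x)
      + logRatio f g x * (weight c f i x - weight d g i x) := by
  have h1 := h.f_pos hx.le
  have h2 := h'.f_pos hx.le
  have h3 := h.pos i
  have h4 := h'.pos i
  have e1 : Real.log (weight d g i x) = Real.log (d i) + Real.log (x ^ i) - Real.log (g x) := by
    unfold weight
    rw [Real.log_div (by positivity) h2.ne', Real.log_mul h4.ne' (by positivity)]
  have e2 : Real.log (weight c f i x) = Real.log (c i) + Real.log (x ^ i) - Real.log (f x) := by
    unfold weight
    rw [Real.log_div (by positivity) h1.ne', Real.log_mul h3.ne' (by positivity)]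
  unfold localEnergy logRatio
  rw [e1, e2]
  ring

lemma integrable_logRatio_weight (h : BalancedSeries β c f) (h' : BalancedSeries β d g) (i : ℕ) :
    IntegrableOn (fun x => logRatio f g x * (weight c f i x - weight d g i x)) (Ioi 0) := by
  refine h.integrable_logRatio_mul h' ((h.integrable i).sub (h'.integrable i)) ?_
  simp only [mul_sub]
  exact (h.integrable_mul_weight i).sub (h'.integrable_mul_weight i)

lemma integrable_localEnergy (h : BalancedSeries β c f) (h' : BalancedSeries β d g) (i : ℕ) :
    IntegrableOn (localEnergy c d f g i) (Ioi 0) := by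
  refine IntegrableOn.congr_fun (((((h'.integrable i).sub (h.integrable i)).const_mul
    (Real.log (d i) - Real.log (c i)))).add (h.integrable_logRatio_weight h' i)) ?_ measurableSet_Ioi
  intro x hx
  exact (h.localEnergy_eq h' hx i).symm

/-- Both weights have the same integral, so the constant part of the logarithm in `localEnergy` drops
out. This is where the two balanced equations are compared. -/
lemma energy_eq (h : BalancedSeries β c f) (h' : BalancedSeries β d g) (i : ℕ) :
    energy c d f g i = ∫ x in Ioi (0:ℝ), logRatio f g x * (weight c f i x - weight d g i x) := by
  unfold energy
  have hi : IntegrableOn (fun x => weight d g i x - weight c f i x) (Ioi 0) :=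
    (h'.integrable i).sub (h.integrable i)
  rw [setIntegral_congr_fun measurableSet_Ioi (fun x hx => h.localEnergy_eq h' hx i),
    integral_add (hi.const_mul _) (h.integrable_logRatio_weight h' i),
    integral_const_mul]
  rw [integral_sub (h'.integrable i) (h.integrable i), h.integral_weight, h'.integral_weight]
  simp

lemma energy_nonneg (h : BalancedSeries β c f) (h' : BalancedSeries β d g) (i : ℕ) :
    0 ≤ energy c d f g i :=
  setIntegral_nonneg measurableSet_Ioi fun _ hx => h.localEnergy_nonneg h' hx i

lemma integral_cdf_sub (h : BalancedSeries β c f) (h' : BalancedSeries β d g) (n : ℕ) :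
    ∫ x in Ioi (0:ℝ), (cdf c f n x - cdf d g n x) = 0 := by
  rw [integral_sub (h.integrable_cdf n) (h'.integrable_cdf n)]
  rcases n with _ | n
  · simp [cdf]
  · rw [h.integral_cdf, h'.integral_cdf, sub_self]

lemma integrable_logRatio_cdf (h : BalancedSeries β c f) (h' : BalancedSeries β d g) (n : ℕ) :
    IntegrableOn (fun x => logRatio f g x * (cdf c f n x - cdf d g n x)) (Ioi 0) := by
  refine h.integrable_logRatio_mul h' ((h.integrable_cdf n).sub (h'.integrable_cdf n)) ?_
  simp only [mul_sub]
  exact (h.integrable_mul_cdf n).sub (h'.integrable_mul_cdf n)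

/-- Summing by parts: the total energy below `n` is an integral against the difference of the
distribution functions. The constant `a` is free since that difference has integral zero. -/
lemma sum_energy_eq (h : BalancedSeries β c f) (h' : BalancedSeries β d g) (n : ℕ) (a : ℝ) :
    ∑ i ∈ Finset.range n, energy c d f g i
      = ∫ x in Ioi (0:ℝ), (logRatio f g x - a) * (cdf c f n x - cdf d g n x) := by
  have hi : IntegrableOn (fun x => cdf c f n x - cdf d g n x) (Ioi 0) :=
    (h.integrable_cdf n).sub (h'.integrable_cdf n)
  simp only [sub_mul _ a]
  rw [integral_sub (h.integrable_logRatio_cdf h' n) (hi.const_mul a), integral_const_mul,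
    h.integral_cdf_sub h', mul_zero, sub_zero]
  simp only [h.energy_eq h']
  rw [← integral_finsetSum _ fun i _ => h.integrable_logRatio_weight h' i]
  congr 1
  ext x
  rw [← Finset.mul_sum, Finset.sum_sub_distrib]
  rfl

end BalancedSeries

/-! ### Integral estimates on windows -/

lemma setIntegral_Ioc_le {F : ℝ → ℝ} {a b K : ℝ} (hab : a ≤ b) (hF : IntegrableOn F (Ioc a b))
    (hK : ∀ x ∈ Ioc a b, F x ≤ K) : ∫ x in Ioc a b, F x ≤ K * (b - a) := by
  have h := setIntegral_mono_on hF (g := fun _ => K) (by simp) measurableSet_Ioc hK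
  rw [setIntegral_const] at h
  simp only [measureReal_def, Real.volume_Ioc, ENNReal.toReal_ofReal (sub_nonneg.2 hab), smul_eq_mul] at h
  linarith

lemma setIntegral_Ioi_le {F : ℝ → ℝ} {X K : ℝ} (hX : 0 < X) (hF : IntegrableOn F (Ioi X))
    (hK : ∀ x ∈ Ioi X, F x ≤ K * (X / x) ^ 2) : ∫ x in Ioi X, F x ≤ K * X := by
  have h := setIntegral_mono_on hF ((integrableOn_div_pow hX 0).const_mul K) measurableSet_Ioi hK
  have h2 := integral_div_pow hX 0
  rw [integral_const_mul, h2] at h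
  simpa using h

lemma setIntegral_Ioi_split {F : ℝ → ℝ} {a b : ℝ} (hab : a ≤ b) (hF : IntegrableOn F (Ioi a)) :
    ∫ x in Ioi a, F x = (∫ x in Ioc a b, F x) + ∫ x in Ioi b, F x := by
  rw [← setIntegral_union]
  · rw [Ioc_union_Ioi_eq_Ioi hab]
  · exact Set.disjoint_left.2 fun t h1 h2 => not_lt.2 h1.2 h2
  · exact measurableSet_Ioi
  · exact hF.mono_set (fun t ht => ht.1)
  · exact hF.mono_set (fun t ht => hab.trans_lt ht)

lemma sq_setIntegral_le {T : ℝ → ℝ} {a b : ℝ} (hab : a < b) (hT : ContinuousOn T (Icc a b)) :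
    (∫ x in Ioc a b, T x) ^ 2 ≤ (b - a) * ∫ x in Ioc a b, T x ^ 2 := by
  set J := ∫ x in Ioc a b, T x with hJ
  have hw : 0 < b - a := by linarith
  have i1 : IntegrableOn T (Ioc a b) := hT.integrableOn_Icc.mono_set Ioc_subset_Icc_self
  have i2 : IntegrableOn (fun x => T x ^ 2) (Ioc a b) :=
    (hT.pow 2).integrableOn_Icc.mono_set Ioc_subset_Icc_self
  have h1 : 0 ≤ ∫ x in Ioc a b, ((T x ^ 2 - 2 * (J / (b - a)) * T x) + (J / (b - a)) ^ 2) := by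
    refine setIntegral_nonneg measurableSet_Ioc fun x _ => ?_
    nlinarith [sq_nonneg (T x - J / (b - a))]
  have i3 : IntegrableOn (fun x => T x ^ 2 - 2 * (J / (b - a)) * T x) (Ioc a b) :=
    i2.sub (i1.const_mul _)
  rw [integral_add i3 (by simp), integral_sub i2 (i1.const_mul _), integral_const_mul, ← hJ,
    setIntegral_const] at h1
  simp only [measureReal_def, Real.volume_Ioc, ENNReal.toReal_ofReal hw.le, smul_eq_mul] at h1
  have e : (∫ x in Ioc a b, T x ^ 2) - 2 * (J / (b - a)) * J + (b - a) * (J / (b - a)) ^ 2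
      = (∫ x in Ioc a b, T x ^ 2) - J ^ 2 / (b - a) := by
    field_simp; ring
  rw [e, sub_nonneg, div_le_iff₀ hw] at h1
  linarith

/-- A function whose derivative is controlled by `T` oscillates by at most a multiple of `∫ T`, so its
product with another function controlled by `T` has integral at most of order
`(∫ T) ^ 2 ≤ (b - a) * ∫ T ^ 2`. The parameter `τ` absorbs error terms. -/
lemma window_bound {ℓ ℓ' T G : ℝ → ℝ} {a b n L τ : ℝ} (ha : 0 < a) (han : a ≤ n) (hnb : n ≤ b)
    (hab : a < b) (hL : 1 ≤ L) (hτ : 0 ≤ τ)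
    (hd : ∀ x ∈ Icc a b, HasDerivAt ℓ (ℓ' x) x) (hT : ContinuousOn T (Icc a b))
    (hT0 : ∀ x ∈ Icc a b, 0 ≤ T x) (hb : ∀ x ∈ Icc a b, |ℓ' x| ≤ (L * T x + τ) / a)
    (hG : ∀ x ∈ Icc a b, |G x| ≤ T x + τ)
    (hi : IntegrableOn (fun x => (ℓ x - ℓ n) * G x) (Ioc a b)) :
    ∫ x in Ioc a b, (ℓ x - ℓ n) * G x
      ≤ 2 * L / a * ((b - a) * (∫ x in Ioc a b, T x ^ 2) + (b - a) ^ 2 * τ ^ 2) := by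
  have hJ2 := sq_setIntegral_le hab hT
  set J := ∫ x in Ioc a b, T x with hJ
  have i1 : IntegrableOn T (Ioc a b) := hT.integrableOn_Icc.mono_set Ioc_subset_Icc_self
  have hw : 0 < b - a := by linarith
  have hJ0 : 0 ≤ J := setIntegral_nonneg measurableSet_Ioc fun x hx => hT0 x (Ioc_subset_Icc_self hx)
  have iB : IntegrableOn (fun x => (L * T x + τ) / a) (Ioc a b) :=
    ((i1.const_mul L).add (by simp)).div_const a
  have eB : ∫ x in Ioc a b, (L * T x + τ) / a = (L * J + (b - a) * τ) / a := by
    rw [integral_div, integral_add (i1.const_mul L) (by simp), integral_const_mul, setIntegral_const]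
    simp only [measureReal_def, Real.volume_Ioc, ENNReal.toReal_ofReal hw.le, smul_eq_mul]
    rw [hJ]
  have hosc : ∀ x ∈ Icc a b, |ℓ x - ℓ n| ≤ (L * J + (b - a) * τ) / a := by
    intro x hx
    have hsub : uIcc n x ⊆ Icc a b := uIcc_subset_Icc ⟨han, hnb⟩ hx
    have hsub' : uIoc n x ⊆ Ioc a b := by
      intro y hy
      rw [mem_uIoc] at hy
      rcases hy with hy | hy
      · exact ⟨han.trans_lt hy.1, hy.2.trans hx.2⟩
      · exact ⟨hx.1.trans_lt hy.1, hy.2.trans hnb⟩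
    have hbd : ∀ y ∈ Icc a b, ‖deriv ℓ y‖ ≤ (L * T y + τ) / a := by
      intro y hy
      rw [(hd y hy).deriv]
      exact hb y hy
    have hintg : IntegrableOn (deriv ℓ) (Ioc a b) :=
      Integrable.mono' iB (measurable_deriv ℓ).aestronglyMeasurable
        (by filter_upwards [ae_restrict_mem measurableSet_Ioc] with y hy using hbd y (Ioc_subset_Icc_self hy))
    have e := intervalIntegral.integral_deriv_eq_sub (f := ℓ) (a := n) (b := x)
      (fun y hy => (hd y (hsub hy)).differentiableAt)
      (intervalIntegrable_iff.2 (hintg.mono_set hsub'))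
    rw [← e, ← Real.norm_eq_abs, ← eB]
    refine (intervalIntegral.norm_integral_le_integral_norm_uIoc).trans ?_
    calc ∫ y in uIoc n x, ‖deriv ℓ y‖ ≤ ∫ y in Ioc a b, ‖deriv ℓ y‖ :=
          setIntegral_mono_set hintg.norm (Filter.Eventually.of_forall fun y => norm_nonneg _)
            (Filter.Eventually.of_forall hsub')
      _ ≤ _ := setIntegral_mono_on hintg.norm iB measurableSet_Ioc fun y hy => hbd y (Ioc_subset_Icc_self hy)
  set K := (L * J + (b - a) * τ) / a with hK
  have hK0 : 0 ≤ K := by positivity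
  have h1 : ∫ x in Ioc a b, (ℓ x - ℓ n) * G x ≤ ∫ x in Ioc a b, K * (T x + τ) := by
    refine setIntegral_mono_on hi ((i1.add (by simp)).const_mul K) measurableSet_Ioc fun x hx => ?_
    have hx' := Ioc_subset_Icc_self hx
    calc (ℓ x - ℓ n) * G x ≤ |(ℓ x - ℓ n) * G x| := le_abs_self _
      _ = |ℓ x - ℓ n| * |G x| := abs_mul _ _
      _ ≤ _ := mul_le_mul (hosc x hx') (hG x hx') (abs_nonneg _) hK0
  rw [integral_const_mul, integral_add i1 (by simp), setIntegral_const, ← hJ] at h1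
  simp only [measureReal_def, Real.volume_Ioc, ENNReal.toReal_ofReal hw.le, smul_eq_mul] at h1
  refine h1.trans ?_
  have hs : 0 ≤ (b - a) * τ := by positivity
  calc K * (J + (b - a) * τ) ≤ L * (J + (b - a) * τ) / a * (J + (b - a) * τ) := by
        rw [hK]
        gcongr
        nlinarith
    _ = L / a * (J + (b - a) * τ) ^ 2 := by ring
    _ ≤ L / a * (2 * (J ^ 2 + ((b - a) * τ) ^ 2)) := by
        gcongr
        nlinarith [sq_nonneg (J - (b - a) * τ)]
    _ ≤ L / a * (2 * ((b - a) * (∫ x in Ioc a b, T x ^ 2) + ((b - a) * τ) ^ 2)) := by gcongr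
    _ = _ := by ring

namespace BalancedSeries

variable {β : ℝ} {c d : ℕ → ℝ} {f g : ℝ → ℝ}

/-- The difference of the means is `∑ (weight d g i x - weight c f i x) * (i - x)`, in which the
indices outside the window `I` are negligible. -/
lemma mean_sub_le (h : BalancedSeries β c f) (h' : BalancedSeries β d g) :
    ∃ C x₀ : ℝ, 0 < C ∧ 1 ≤ x₀ ∧ ∀ x : ℝ, x₀ ≤ x → ∀ (I : Finset ℕ) (L : ℝ),
      (∀ i ∉ I, x ^ 3 ≤ |(i:ℝ) - x| ^ 5) → (∀ i ∈ I, |(i:ℝ) - x| ≤ L) →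
      |meanIndex d g x - meanIndex c f x|
        ≤ L * (∑ i ∈ I, |weight d g i x - weight c f i x|) + C / x ^ 4 := by
  obtain ⟨C, x₀, hC, hx₀, hfar⟩ := h.far_moment
  obtain ⟨C', x₀', hC', hx₀', hfar'⟩ := h'.far_moment
  refine ⟨C + C', max x₀ x₀', by positivity, hx₀.trans (le_max_left _ _), fun x hx I L hI hL => ?_⟩
  obtain ⟨hs, hb⟩ := hfar x ((le_max_left _ _).trans hx)
  obtain ⟨hs', hb'⟩ := hfar' x ((le_max_right _ _).trans hx)
  have hx0 : 0 < x := by have := le_max_left x₀ x₀'; linarith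
  have hb := hb (↑I)ᶜ (fun i hi => hI i (by simpa using hi))
  have hb' := hb' (↑I)ᶜ (fun i hi => hI i (by simpa using hi))
  have hw := h.hasSum_weight hx0.le
  have hw' := h'.hasSum_weight hx0.le
  have hm := (h.summable_mul_index hx0).hasSum
  have hm' := (h'.summable_mul_index hx0).hasSum
  have hD : HasSum (fun i : ℕ => (weight d g i x - weight c f i x) * ((i:ℝ) - x))
      (meanIndex d g x - meanIndex c f x) := by
    have := (hm'.sub hm).sub ((hw'.sub hw).mul_right x)
    have e1 : (fun i : ℕ => (weight d g i x - weight c f i x) * ((i:ℝ) - x)) = fun i : ℕ =>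
        weight d g i x * i - weight c f i x * i - (weight d g i x - weight c f i x) * x := by
      ext i; ring
    have e2 : meanIndex d g x - meanIndex c f x = (∑' i : ℕ, weight d g i x * i)
        - (∑' i : ℕ, weight c f i x * i) - (1 - 1) * x := by
      unfold meanIndex; ring
    rw [e1, e2]
    exact this
  have hI1 : HasSum ((I:Set ℕ).indicator fun i : ℕ => L * |weight d g i x - weight c f i x|)
      (L * (∑ i ∈ I, |weight d g i x - weight c f i x|)) := by
    rw [Finset.mul_sum]
    have e : ∑ i ∈ I, L * |weight d g i x - weight c f i x| = ∑ i ∈ I,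
        (I:Set ℕ).indicator (fun i : ℕ => L * |weight d g i x - weight c f i x|) i :=
      Finset.sum_congr rfl fun i hi => by rw [indicator_of_mem (by exact_mod_cast hi)]
    rw [e]
    exact hasSum_sum_of_ne_finset_zero (L := .unconditional ℕ)
      fun i hi => indicator_of_notMem (by simpa using hi) _
  have hU := hI1.add ((hs.indicator (↑I)ᶜ).hasSum.add (hs'.indicator (↑I)ᶜ).hasSum)
  have hle : ∀ i, |(weight d g i x - weight c f i x) * ((i:ℝ) - x)| ≤
      ((I:Set ℕ).indicator fun i : ℕ => L * |weight d g i x - weight c f i x|) i +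
      ((I:Set ℕ)ᶜ.indicator (fun i : ℕ => weight c f i x * |(i:ℝ) - x|) i +
       (I:Set ℕ)ᶜ.indicator (fun i : ℕ => weight d g i x * |(i:ℝ) - x|) i) := by
    intro i
    rw [abs_mul]
    have h1 := h.weight_nonneg hx0.le i
    have h2 := h'.weight_nonneg hx0.le i
    by_cases hi : i ∈ I
    · rw [indicator_of_mem (by exact_mod_cast hi), indicator_of_notMem (by simpa using hi),
        indicator_of_notMem (by simpa using hi), add_zero, add_zero, mul_comm]
      have := hL i hi
      gcongr
    · rw [indicator_of_notMem (by simpa using hi), indicator_of_mem (by simpa using hi),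
        indicator_of_mem (by simpa using hi), zero_add, ← add_mul]
      have : |weight d g i x - weight c f i x| ≤ weight c f i x + weight d g i x := by
        rw [abs_le]; constructor <;> linarith
      gcongr
  have hA := hasSum_le (fun i => (abs_le.1 (hle i)).2) hD hU
  have hB := hasSum_le (fun i => neg_le.1 (abs_le.1 (hle i)).1) hD.neg hU
  rw [add_div]
  rw [abs_le]
  constructor <;> linarith

end BalancedSeries

/-! ### Quadratic growth of the energy and total variation -/

namespace BalancedSeries

variable {β : ℝ} {c d : ℕ → ℝ} {f g : ℝ → ℝ}

/-- When all indices below `n`, or all indices from `n` on, are far from `x`, the two distribution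
functions agree up to `C / x ^ 4`; the second estimate extends to all smaller arguments by
monotonicity. -/
lemma cdf_sub_far (h : BalancedSeries β c f) (h' : BalancedSeries β d g) :
    ∃ C x₀ : ℝ, 0 < C ∧ 1 ≤ x₀ ∧ ∀ x : ℝ, x₀ ≤ x → ∀ n : ℕ,
      ((∀ i < n, x ^ 3 ≤ |(i:ℝ) - x| ^ 5) → |cdf c f n x - cdf d g n x| ≤ C / x ^ 4) ∧
      ((∀ i, n ≤ i → x ^ 3 ≤ |(i:ℝ) - x| ^ 5) →
        ∀ y : ℝ, 0 < y → y ≤ x → |cdf c f n y - cdf d g n y| ≤ C / x ^ 4) := by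
  obtain ⟨C, x₀, hC, hx₀, hfar⟩ := h.far_sum
  obtain ⟨C', x₀', hC', hx₀', hfar'⟩ := h'.far_sum
  refine ⟨C + C', max x₀ x₀', by positivity, hx₀.trans (le_max_left _ _), fun x hx n => ?_⟩
  have h1 := hfar x ((le_max_left _ _).trans hx) n
  have h2 := hfar' x ((le_max_right _ _).trans hx) n
  have hx0 : 0 < x := by have := le_max_left x₀ x₀'; linarith
  have p1 : 0 < C / x ^ 4 := by positivity
  have p2 : 0 < C' / x ^ 4 := by positivity
  rw [add_div]
  constructor
  · intro hi
    have := h1.1 hi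
    have := h2.1 hi
    have := h.cdf_nonneg hx0.le n
    have := h'.cdf_nonneg hx0.le n
    rw [abs_le]; constructor <;> linarith
  · intro hi y hy hyx
    have := h1.2 hi
    have := h2.2 hi
    have := h.cdf_antitone hy hyx n
    have := h'.cdf_antitone hy hyx n
    have := h.cdf_le_one hy.le n
    have := h'.cdf_le_one hy.le n
    rw [abs_le]; constructor <;> linarith

lemma abs_cdf_sub_le_one (h : BalancedSeries β c f) (h' : BalancedSeries β d g) {x : ℝ} (hx : 0 < x)
    (n : ℕ) : |cdf c f n x - cdf d g n x| ≤ 1 := by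
  have := h.cdf_le_one hx.le n
  have := h'.cdf_le_one hx.le n
  have := h.cdf_nonneg hx.le n
  have := h'.cdf_nonneg hx.le n
  rw [abs_le]; constructor <;> linarith

/-- The total energy below `n` grows at most quadratically: the integrand of `sum_energy_eq` is
`O(n)` on an interval of length `O(n)` and negligible beyond. -/
lemma energy_growth (h : BalancedSeries β c f) (h' : BalancedSeries β d g) :
    ∃ K : ℝ, 0 < K ∧ ∀ n : ℕ, ∑ i ∈ Finset.range n, energy c d f g i ≤ K * (1 + n) ^ 2 := by
  obtain ⟨C, hC, hℓ⟩ := h.logRatio_bound h'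
  obtain ⟨C', x₀, hC', hx₀, hfar⟩ := h.cdf_sub_far h'
  refine ⟨(C + 2 * C * C') * (x₀ + 33) ^ 2, by positivity, fun n => ?_⟩
  set X : ℝ := x₀ + 2 * n + 32 with hX
  have hn0 : (0:ℝ) ≤ n := Nat.cast_nonneg n
  have hX0 : 0 < X := by linarith
  have hXB : 1 + X ≤ (x₀ + 33) * (1 + n) := by nlinarith
  have hintg := h.integrable_logRatio_cdf h' n
  have hsum := h.sum_energy_eq h' n 0
  simp only [sub_zero] at hsum
  rw [hsum, setIntegral_Ioi_split hX0.le hintg]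
  have e1 : ∫ x in Ioc 0 X, logRatio f g x * (cdf c f n x - cdf d g n x) ≤ C * (1 + X) * (X - 0) := by
    refine setIntegral_Ioc_le hX0.le (hintg.mono_set fun x hx => hx.1) fun x hx => ?_
    calc _ ≤ |logRatio f g x * (cdf c f n x - cdf d g n x)| := le_abs_self _
      _ = |logRatio f g x| * |cdf c f n x - cdf d g n x| := abs_mul _ _
      _ ≤ (C * (1 + x)) * 1 := mul_le_mul (hℓ x hx.1) (h.abs_cdf_sub_le_one h' hx.1 n)
          (abs_nonneg _) (by have := hx.1; positivity)
      _ ≤ _ := by rw [mul_one]; have := hx.2; gcongr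
  have e2 : ∫ x in Ioi X, logRatio f g x * (cdf c f n x - cdf d g n x) ≤ 2 * C * C' * X := by
    refine setIntegral_Ioi_le hX0 (hintg.mono_set fun x hx => hX0.trans hx) fun x hx => ?_
    have hx' : X < x := hx
    have hx0 : 0 < x := hX0.trans hx
    have hG := (hfar x (by linarith) n).1 fun i hi => by
      have hi' : (i:ℝ) < n := by exact_mod_cast hi
      have : x / 2 ≤ |(i:ℝ) - x| := by
        rw [abs_sub_comm]
        exact le_trans (by linarith) (le_abs_self _)
      calc x ^ 3 ≤ (x / 2) ^ 5 := by
            have : (32:ℝ) ≤ x ^ 2 := by nlinarith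
            have : 0 < x ^ 3 := by positivity
            nlinarith
        _ ≤ _ := by gcongr
    calc _ ≤ |logRatio f g x * (cdf c f n x - cdf d g n x)| := le_abs_self _
      _ = |logRatio f g x| * |cdf c f n x - cdf d g n x| := abs_mul _ _
      _ ≤ (C * (x + x)) * (C' / x ^ 4) := by
          refine mul_le_mul ((hℓ x hx0).trans ?_) hG (abs_nonneg _) (by positivity)
          gcongr
          linarith
      _ = 2 * C * C' * (1 / x) * (1 / x) ^ 2 := by field_simp; ring
      _ ≤ 2 * C * C' * 1 * (X / x) ^ 2 := by
          gcongr
          · rw [div_le_one hx0]; linarith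
          · linarith
      _ = _ := by ring
  have : 0 < C * C' := by positivity
  calc _ ≤ C * (1 + X) * (X - 0) + 2 * C * C' * X := add_le_add e1 e2
    _ ≤ (C + 2 * C * C') * (1 + X) ^ 2 := by nlinarith [mul_pos hC hX0, mul_pos this hX0, mul_pos this (sq_pos_of_pos hX0)]
    _ ≤ (C + 2 * C * C') * ((x₀ + 33) * (1 + n)) ^ 2 := by gcongr
    _ = _ := by ring

/-- Cauchy–Schwarz comparison of the total variation on a window with the local energy. -/
lemma sq_sum_abs_le (h : BalancedSeries β c f) (h' : BalancedSeries β d g) {x : ℝ} (hx : 0 < x)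
    (I : Finset ℕ) :
    (∑ i ∈ I, |weight d g i x - weight c f i x|) ^ 2 ≤ 2 * ∑ i ∈ I, localEnergy c d f g i x := by
  have hp := fun i => h.weight_pos hx i
  have hp' := fun i => h'.weight_pos hx i
  have h1 := Finset.sum_sq_le_sum_mul_sum_of_sq_le_mul I
    (r := fun i => |weight d g i x - weight c f i x|)
    (f := fun i => weight d g i x + weight c f i x)
    (g := fun i => (weight d g i x - weight c f i x) ^ 2 / (weight d g i x + weight c f i x))
    (fun i _ => (add_pos (hp' i) (hp i)).le)
    (fun i _ => div_nonneg (sq_nonneg _) (add_pos (hp' i) (hp i)).le)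
    (fun i _ => by have := add_pos (hp' i) (hp i); rw [sq_abs]; apply le_of_eq; field_simp)
  refine h1.trans ?_
  have h2 : ∑ i ∈ I, (weight d g i x + weight c f i x) ≤ 2 := by
    rw [Finset.sum_add_distrib]
    linarith [h.sum_weight_le_one hx.le I, h'.sum_weight_le_one hx.le I]
  exact mul_le_mul h2 (Finset.sum_le_sum fun i _ => h.localEnergy_ge h' hx i)
    (Finset.sum_nonneg fun i _ => div_nonneg (sq_nonneg _) (add_pos (hp' i) (hp i)).le) (by norm_num)

lemma continuousOn_window (h : BalancedSeries β c f) (h' : BalancedSeries β d g) (I : Finset ℕ) :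
    ContinuousOn (fun x => ∑ i ∈ I, |weight d g i x - weight c f i x|) (Ioi 0) :=
  continuousOn_finsetSum _ fun i _ => ((h'.continuousOn_weight i).sub (h.continuousOn_weight i)).abs

lemma integral_sq_window (h : BalancedSeries β c f) (h' : BalancedSeries β d g) {a b : ℝ} (ha : 0 < a)
    (I : Finset ℕ) :
    ∫ x in Ioc a b, (∑ i ∈ I, |weight d g i x - weight c f i x|) ^ 2
      ≤ 2 * ∑ i ∈ I, energy c d f g i := by
  have hc : ContinuousOn (fun x => ∑ i ∈ I, |weight d g i x - weight c f i x|) (Icc a b) :=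
    (h.continuousOn_window h' I).mono fun x hx => ha.trans_le hx.1
  have hE : IntegrableOn (fun x => 2 * ∑ i ∈ I, localEnergy c d f g i x) (Ioi 0) :=
    (integrable_finsetSum I fun i _ => h.integrable_localEnergy h' i).const_mul 2
  calc _ ≤ ∫ x in Ioc a b, 2 * ∑ i ∈ I, localEnergy c d f g i x :=
        setIntegral_mono_on ((hc.pow 2).integrableOn_Icc.mono_set Ioc_subset_Icc_self)
          (hE.mono_set fun x hx => ha.trans hx.1) measurableSet_Ioc
          fun x hx => h.sq_sum_abs_le h' (ha.trans hx.1) I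
    _ ≤ ∫ x in Ioi 0, 2 * ∑ i ∈ I, localEnergy c d f g i x := by
        refine setIntegral_mono_set hE ?_ (Filter.Eventually.of_forall fun x hx => ha.trans hx.1)
        filter_upwards [ae_restrict_mem measurableSet_Ioi] with x hx
        exact mul_nonneg (by norm_num) (Finset.sum_nonneg fun i _ => h.localEnergy_nonneg h' hx i)
    _ = _ := by
        rw [integral_const_mul, integral_finsetSum _ fun i _ => h.integrable_localEnergy h' i]
        rfl

lemma abs_cdf_sub_le_window {m n k : ℕ} (hmn : m ≤ n) (hnk : n ≤ k) (x : ℝ) :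
    |cdf c f n x - cdf d g n x| ≤ (∑ i ∈ Finset.Ico m k, |weight d g i x - weight c f i x|)
      + |cdf c f m x - cdf d g m x| := by
  have e : cdf c f n x - cdf d g n x = (∑ i ∈ Finset.Ico m n, (weight c f i x - weight d g i x))
      + (cdf c f m x - cdf d g m x) := by
    rw [Finset.sum_sub_distrib, Finset.sum_Ico_eq_sub _ hmn, Finset.sum_Ico_eq_sub _ hmn]
    unfold cdf
    ring
  rw [e]
  refine (abs_add_le _ _).trans ?_
  gcongr
  refine (Finset.abs_sum_le_sum_abs _ _).trans ?_
  simp only [abs_sub_comm (weight c f _ x)]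
  exact Finset.sum_le_sum_of_subset_of_nonneg (Finset.Ico_subset_Ico le_rfl hnk)
    fun i _ _ => abs_nonneg _

end BalancedSeries

/-! ### The window inequality -/

namespace BalancedSeries

variable {β : ℝ} {c d : ℕ → ℝ} {f g : ℝ → ℝ}

lemma _root_.pow_three_le_third_pow_five {x : ℝ} (hx : 16 ≤ x) : x ^ 3 ≤ (x / 3) ^ 5 := by
  have h1 : (243:ℝ) ≤ x ^ 2 := by nlinarith
  have h2 : 0 ≤ x ^ 3 := by positivity
  calc x ^ 3 = x ^ 3 * 243 / 243 := by ring
    _ ≤ x ^ 3 * x ^ 2 / 243 := by gcongr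
    _ = _ := by ring

set_option maxHeartbeats 2000000 in
/-- The energy below `n ≍ Q ^ 5` is controlled by `Q` times the energy in a window of radius
`6 Q ^ 3` around `n`. In `sum_energy_eq` the difference of the distribution functions is negligible
for `|x - n| > 4 Q ^ 3`, and on the remaining interval both factors are controlled by the total
variation on the window, whose square is at most twice the local energy. -/
lemma energy_window (h : BalancedSeries β c f) (h' : BalancedSeries β d g) :
    ∃ (C : ℝ) (Q₀ : ℕ), 0 < C ∧ 4 ≤ Q₀ ∧ ∀ Q n : ℕ, Q₀ ≤ Q → Q ^ 5 ≤ n → n ≤ 2 * Q ^ 5 →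
      ∑ i ∈ Finset.range n, energy c d f g i
        ≤ 640 * Q * (∑ i ∈ Finset.Ico (n - 6 * Q ^ 3) (n + 6 * Q ^ 3), energy c d f g i) + C / Q := by
  obtain ⟨Cl, hCl, hℓ⟩ := h.logRatio_bound h'
  obtain ⟨Cf, xf, hCf, hxf, hfar⟩ := h.cdf_sub_far h'
  obtain ⟨Cm, xm, hCm, hxm, hmean⟩ := h.mean_sub_le h'
  set C := Cl + Cf + Cm with hC
  have hC0 : 0 < C := by positivity
  obtain ⟨N, hN⟩ := exists_nat_ge (xf + xm)
  refine ⟨2600 * C ^ 2, N + 4, by positivity, by omega, fun Q n hQ hn1 hn2 => ?_⟩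
  have hQN : (N:ℝ) + 4 ≤ Q := by exact_mod_cast hQ
  set q : ℝ := (Q:ℝ) with hq
  have hNn : (0:ℝ) ≤ N := Nat.cast_nonneg N
  have hq4 : 4 ≤ q := by linarith
  have hn1' : q ^ 5 ≤ n := by rw [hq]; exact_mod_cast hn1
  have hn2' : (n:ℝ) ≤ 2 * q ^ 5 := by rw [hq]; exact_mod_cast hn2
  have hq0 : 0 < q := by linarith
  have hq3 : 64 ≤ q ^ 3 := by
    calc (64:ℝ) = 4 ^ 3 := by norm_num
      _ ≤ _ := by gcongr
  have hq5 : 16 * q ^ 3 ≤ q ^ 5 := by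
    have : 16 ≤ q ^ 2 := by nlinarith
    nlinarith
  have hq51 : 256 * q ≤ q ^ 5 := by
    have : (4:ℝ) ^ 4 ≤ q ^ 4 := by gcongr
    nlinarith
  have hHn : 6 * Q ^ 3 ≤ n := by
    have : 16 * Q ^ 3 ≤ Q ^ 5 := by rw [hq] at hq5; exact_mod_cast hq5
    omega
  have hcm : ((n - 6 * Q ^ 3 : ℕ) : ℝ) = n - 6 * q ^ 3 := by
    rw [Nat.cast_sub hHn]; push_cast; rfl
  have hcp : ((n + 6 * Q ^ 3 : ℕ) : ℝ) = n + 6 * q ^ 3 := by push_cast; rfl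
  set I := Finset.Ico (n - 6 * Q ^ 3) (n + 6 * Q ^ 3) with hI
  set S := ∑ i ∈ I, energy c d f g i with hS
  have hS0 : 0 ≤ S := Finset.sum_nonneg fun i _ => h.energy_nonneg h' i
  set a : ℝ := n - 4 * q ^ 3 with ha
  set b : ℝ := n + 4 * q ^ 3 with hb
  have haq : q ^ 5 / 2 ≤ a := by linarith
  have ha_q : q ≤ a := by linarith
  have ha0 : 0 < a := by linarith
  have ha1 : 1 ≤ a := by linarith
  have han : a ≤ n := by linarith
  have hnb : (n:ℝ) ≤ b := by linarith
  have hna : (n:ℝ) ≤ 2 * a := by linarith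
  have hab : a < b := by linarith
  have hn0 : (0:ℝ) < n := by linarith
  have hb0 : 0 < b := by linarith
  have hxfa : xf ≤ a := by linarith
  have hxma : xm ≤ a := by linarith
  have hℓn : |logRatio f g n| ≤ C * (1 + n) := (hℓ n hn0).trans (by gcongr; linarith)
  have hℓ' : ∀ x : ℝ, 0 < x → |logRatio f g x - logRatio f g n| ≤ C * (1 + x) + C * (1 + n) := by
    intro x hx
    refine (abs_sub _ _).trans (add_le_add ((hℓ x hx).trans ?_) hℓn)
    gcongr; linarith
  have hintg : IntegrableOn (fun x => (logRatio f g x - logRatio f g n) * (cdf c f n x - cdf d g n x)) (Ioi 0) := by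
    simp only [sub_mul _ (logRatio f g n)]
    exact (h.integrable_logRatio_cdf h' n).sub
      (((h.integrable_cdf n).sub (h'.integrable_cdf n)).const_mul _)
  rw [h.sum_energy_eq h' n (logRatio f g n), setIntegral_Ioi_split ha0.le hintg,
    setIntegral_Ioi_split hab.le (hintg.mono_set fun x hx => ha0.trans hx)]
  have e1 : ∫ x in Ioc 0 a, (logRatio f g x - logRatio f g n) * (cdf c f n x - cdf d g n x)
      ≤ 4 * C * n * (C / a ^ 4) * (a - 0) := by
    refine setIntegral_Ioc_le ha0.le (hintg.mono_set fun x hx => hx.1) fun x hx => ?_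
    have hx0 : 0 < x := hx.1
    have hG : |cdf c f n x - cdf d g n x| ≤ C / a ^ 4 := by
      refine ((hfar a hxfa n).2 (fun i hi => ?_) x hx.1 hx.2).trans (by gcongr; linarith)
      have hi' : (n:ℝ) ≤ i := by exact_mod_cast hi
      calc a ^ 3 ≤ (2 * q ^ 5) ^ 3 := by gcongr; linarith
        _ = 8 * q ^ 15 := by ring
        _ ≤ 1024 * q ^ 15 := by gcongr; norm_num
        _ = (4 * q ^ 3) ^ 5 := by ring
        _ ≤ _ := by
          gcongr
          exact le_trans (by linarith) (le_abs_self _)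
    have hxa := hx.2
    calc _ ≤ |(logRatio f g x - logRatio f g n) * (cdf c f n x - cdf d g n x)| := le_abs_self _
      _ = |logRatio f g x - logRatio f g n| * |cdf c f n x - cdf d g n x| := abs_mul _ _
      _ ≤ (C * (n + n) + C * (n + n)) * (C / a ^ 4) := by
          refine mul_le_mul ((hℓ' x hx0).trans ?_) hG (abs_nonneg _) (by positivity)
          gcongr <;> linarith
      _ = _ := by ring
  have e3 : ∫ x in Ioi b, (logRatio f g x - logRatio f g n) * (cdf c f n x - cdf d g n x)
      ≤ 4 * C ^ 2 / b ^ 2 * b := by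
    refine setIntegral_Ioi_le hb0 (hintg.mono_set fun x hx => hb0.trans hx) fun x hx => ?_
    have hx' : b < x := hx
    have hx0 : 0 < x := hb0.trans hx
    have hG : |cdf c f n x - cdf d g n x| ≤ C / x ^ 4 := by
      refine ((hfar x (by linarith) n).1 (fun i hi => ?_)).trans (by gcongr; linarith)
      have hi' : (i:ℝ) < n := by exact_mod_cast hi
      rw [abs_sub_comm]
      rcases le_total x (3 * q ^ 5) with hx3 | hx3
      · calc x ^ 3 ≤ (3 * q ^ 5) ^ 3 := by gcongr
          _ = 27 * q ^ 15 := by ring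
          _ ≤ 1024 * q ^ 15 := by gcongr; norm_num
          _ = (4 * q ^ 3) ^ 5 := by ring
          _ ≤ _ := by
            gcongr
            exact le_trans (by linarith) (le_abs_self _)
      · calc x ^ 3 ≤ (x / 3) ^ 5 :=
              pow_three_le_third_pow_five (by linarith)
          _ ≤ _ := by
            gcongr
            exact le_trans (by linarith) (le_abs_self _)
    calc _ ≤ |(logRatio f g x - logRatio f g n) * (cdf c f n x - cdf d g n x)| := le_abs_self _
      _ = |logRatio f g x - logRatio f g n| * |cdf c f n x - cdf d g n x| := abs_mul _ _
      _ ≤ (C * (x + x) + C * (x + x)) * (C / x ^ 4) := by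
          refine mul_le_mul ((hℓ' x hx0).trans ?_) hG (abs_nonneg _) (by positivity)
          gcongr <;> linarith
      _ = 4 * C ^ 2 * (1 / x) * (1 / x ^ 2) := by field_simp; ring
      _ ≤ 4 * C ^ 2 * 1 * (1 / x ^ 2) := by
          gcongr
          rw [div_le_one hx0]; linarith
      _ = _ := by field_simp
  have e2 : ∫ x in Ioc a b, (logRatio f g x - logRatio f g n) * (cdf c f n x - cdf d g n x)
      ≤ 2 * (10 * q ^ 3) / a * ((b - a) * (∫ x in Ioc a b, (∑ i ∈ I, |weight d g i x - weight c f i x|) ^ 2)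
        + (b - a) ^ 2 * (C / a ^ 4) ^ 2) := by
    have hx3 : ∀ x ∈ Icc a b, x ^ 3 ≤ (2 * q ^ 3) ^ 5 := by
      intro x hx
      have h0 : 0 < x := ha0.trans_le hx.1
      calc x ^ 3 ≤ (3 * q ^ 5) ^ 3 := by gcongr; linarith [hx.2]
          _ = 27 * q ^ 15 := by ring
          _ ≤ 32 * q ^ 15 := by gcongr; norm_num
          _ = _ := by ring
    have hτ : ∀ x ∈ Icc a b, ∀ D : ℝ, 0 ≤ D → D ≤ C → D / x ^ 4 ≤ C / a ^ 4 := by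
      intro x hx D hD hDC
      have := hx.1
      gcongr
    refine window_bound (ℓ' := fun x => (meanIndex d g x - meanIndex c f x) / x) ha0 han hnb hab
      (by linarith) (by positivity)
      (fun x hx => h.hasDerivAt_logRatio h' (ha0.trans_le hx.1))
      ((h.continuousOn_window h' I).mono fun x hx => ha0.trans_le hx.1)
      (fun x hx => Finset.sum_nonneg fun i _ => abs_nonneg _) ?_ ?_
      (hintg.mono_set fun x hx => ha0.trans hx.1)
    · intro x hx
      have hx0 : 0 < x := ha0.trans_le hx.1
      have hxa := hx.1
      have hxb := hx.2
      rw [abs_div, abs_of_pos hx0]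
      have := hmean x (hxma.trans hx.1) I (10 * q ^ 3) (fun i hi => ?_) (fun i hi => ?_)
      · have h2 := hτ x hx Cm hCm.le (by linarith)
        gcongr
        linarith
      · refine (hx3 x hx).trans ?_
        gcongr
        rw [hI, Finset.mem_Ico, not_and_or, not_le, not_lt] at hi
        rcases hi with hi | hi
        · have hi' : (i:ℝ) < n - 6 * q ^ 3 := by rw [← hcm]; exact_mod_cast hi
          rw [abs_sub_comm]
          exact le_trans (by linarith) (le_abs_self _)
        · have hi' : n + 6 * q ^ 3 ≤ (i:ℝ) := by rw [← hcp]; exact_mod_cast hi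
          exact le_trans (by linarith) (le_abs_self _)
      · rw [hI, Finset.mem_Ico] at hi
        have hi1 : n - 6 * q ^ 3 ≤ (i:ℝ) := by rw [← hcm]; exact_mod_cast hi.1
        have hi2 : (i:ℝ) < n + 6 * q ^ 3 := by rw [← hcp]; exact_mod_cast hi.2
        rw [abs_le]; constructor <;> linarith
    · intro x hx
      have hx0 : 0 < x := ha0.trans_le hx.1
      refine (abs_cdf_sub_le_window (m := n - 6 * Q ^ 3) (k := n + 6 * Q ^ 3) (Nat.sub_le _ _)
        (Nat.le_add_right _ _) x).trans ?_
      gcongr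
      refine ((hfar x (hxfa.trans hx.1) _).1 fun i hi => ?_).trans (hτ x hx Cf hCf.le (by linarith))
      refine (hx3 x hx).trans ?_
      have hi' : (i:ℝ) < n - 6 * q ^ 3 := by rw [← hcm]; exact_mod_cast hi
      gcongr
      rw [abs_sub_comm]
      have := hx.1
      exact le_trans (by linarith) (le_abs_self _)
  have f1 : 4 * C * n * (C / a ^ 4) * (a - 0) ≤ 8 * C ^ 2 / q := by
    calc 4 * C * n * (C / a ^ 4) * (a - 0) ≤ 4 * C * (2 * a) * (C / a ^ 4) * (a - 0) := by
          rw [sub_zero]; gcongr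
      _ = 8 * C ^ 2 / a * (1 / a) := by field_simp; ring
      _ ≤ 8 * C ^ 2 / q * 1 := by
          gcongr
          rw [div_le_one ha0]; exact ha1
      _ = _ := mul_one _
  have f3 : 4 * C ^ 2 / b ^ 2 * b ≤ 4 * C ^ 2 / q := by
    calc 4 * C ^ 2 / b ^ 2 * b = 4 * C ^ 2 / b := by field_simp
      _ ≤ _ := by gcongr; linarith
  have f2 : 2 * (10 * q ^ 3) / a * ((b - a) * (∫ x in Ioc a b, (∑ i ∈ I, |weight d g i x - weight c f i x|) ^ 2)
        + (b - a) ^ 2 * (C / a ^ 4) ^ 2) ≤ 640 * q * S + 2560 * C ^ 2 / q := by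
    have hba : b - a = 8 * q ^ 3 := by rw [ha, hb]; ring
    have hT := h.integral_sq_window h' ha0 (b := b) I
    have hC2 : C / a ^ 4 ≤ C / q ^ 4 := by gcongr
    rw [hba]
    calc _ ≤ 2 * (10 * q ^ 3) / (q ^ 5 / 2) * (8 * q ^ 3 * (2 * S) + (8 * q ^ 3) ^ 2 * (C / q ^ 4) ^ 2) := by
          gcongr
      _ = 640 * q * S + 2560 * C ^ 2 / q * (1 / q ^ 3) := by field_simp; ring
      _ ≤ 640 * q * S + 2560 * C ^ 2 / q * 1 := by
          gcongr
          rw [div_le_one (by positivity)]; linarith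
      _ = _ := by ring
  have : 2600 * C ^ 2 / q = 8 * C ^ 2 / q + 4 * C ^ 2 / q + 2560 * C ^ 2 / q + 28 * (C ^ 2 / q) := by ring
  have : 0 < C ^ 2 / q := by positivity
  linarith

end BalancedSeries

/-! ### Uniqueness up to a constant factor -/

/-- The window inequality forces the partial sums to grow by a factor `2 ^ 11` whenever `n` grows
by a factor `2 ^ 5`, which beats quadratic growth. -/
lemma eq_zero_of_window_growth {ε : ℕ → ℝ} (hε : ∀ i, 0 ≤ ε i) {K C : ℝ} {Q₀ : ℕ}
    (hQ₀ : 4 ≤ Q₀) (hK : ∀ n : ℕ, ∑ i ∈ Finset.range n, ε i ≤ K * (1 + n) ^ 2)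
    (hw : ∀ Q n : ℕ, Q₀ ≤ Q → Q ^ 5 ≤ n → n ≤ 2 * Q ^ 5 → ∑ i ∈ Finset.range n, ε i
      ≤ 640 * Q * (∑ i ∈ Finset.Ico (n - 6 * Q ^ 3) (n + 6 * Q ^ 3), ε i) + C / Q) :
    ε 0 = 0 := by
  by_contra hne
  have hε0 : 0 < ε 0 := lt_of_le_of_ne (hε 0) (Ne.symm hne)
  set E : ℕ → ℝ := fun n => ∑ i ∈ Finset.range n, ε i with hE
  have hmono : ∀ m n : ℕ, m ≤ n → E m ≤ E n := fun m n hmn =>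
    Finset.sum_le_sum_of_subset_of_nonneg (Finset.range_mono hmn) fun i _ _ => hε i
  have hE1 : ∀ n : ℕ, 1 ≤ n → ε 0 ≤ E n := fun n hn => by
    have := hmono 1 n hn
    simpa [hE] using this
  obtain ⟨N, hN⟩ := exists_nat_ge (2 * C / ε 0)
  -- once `C / Q` is absorbed, the sum gains a factor `1 + 1 / (1280 * Q)` over `12 * Q ^ 3` indices
  have hstep : ∀ Q m : ℕ, Q₀ ≤ Q → N ≤ Q → Q ^ 5 ≤ m → m + 6 * Q ^ 3 ≤ 2 * Q ^ 5 →
      (1 + 1 / (1280 * Q : ℝ)) * E m ≤ E (m + 12 * Q ^ 3) := by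
    intro Q m hQ hNQ hm1 hm2
    have hQ0 : 0 < Q := by omega
    have hQ0' : (0:ℝ) < Q := by exact_mod_cast hQ0
    have h1 := hw Q (m + 6 * Q ^ 3) hQ (by omega) hm2
    rw [Nat.add_sub_cancel, show m + 6 * Q ^ 3 + 6 * Q ^ 3 = m + 12 * Q ^ 3 by ring,
      Finset.sum_Ico_eq_sub _ (Nat.le_add_right _ _)] at h1
    change E (m + 6 * Q ^ 3) ≤ 640 * Q * (E (m + 12 * Q ^ 3) - E m) + C / Q at h1
    have h2 : E m ≤ E (m + 6 * Q ^ 3) := hmono _ _ (Nat.le_add_right _ _)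
    have h3 : ε 0 ≤ E m := hE1 m (le_trans (Nat.one_le_pow _ _ hQ0) hm1)
    have h4 : C / Q ≤ ε 0 / 2 := by
      have hNQ' : (N:ℝ) ≤ Q := by exact_mod_cast hNQ
      have := hN.trans hNQ'
      rw [div_le_iff₀ hε0] at this
      rw [div_le_iff₀ hQ0']
      linarith
    have h5 : E m ≤ (E (m + 12 * Q ^ 3) - E m) * (1280 * Q) := by linarith
    rw [← div_le_iff₀ (by positivity)] at h5
    have : (1 + 1 / (1280 * Q : ℝ)) * E m = E m + E m / (1280 * Q) := by ring
    linarith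
  -- `2048 * 1280 * Q` such steps gain a factor `1 + 2048` by Bernoulli, and fit into the interval
  -- from `Q ^ 5` to `2 * Q ^ 5` as soon as `Q ≥ 12 * 2048 * 1280 = 31457280`
  have hdouble : ∀ Q : ℕ, Q₀ ≤ Q → N ≤ Q → 31457280 ≤ Q → 2048 * E (Q ^ 5) ≤ E ((2 * Q) ^ 5) := by
    intro Q hQ hNQ hbig
    have hQ0 : 0 < Q := by omega
    have hQ0' : (0:ℝ) < Q := by exact_mod_cast hQ0
    have hlen : 2048 * 1280 * Q * (12 * Q ^ 3) ≤ Q ^ 5 := by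
      calc 2048 * 1280 * Q * (12 * Q ^ 3) = 31457280 * Q ^ 4 := by ring
        _ ≤ Q * Q ^ 4 := Nat.mul_le_mul_right _ hbig
        _ = _ := by ring
    have hit : ∀ j : ℕ, j ≤ 2048 * 1280 * Q →
        (1 + 1 / (1280 * Q : ℝ)) ^ j * E (Q ^ 5) ≤ E (Q ^ 5 + j * (12 * Q ^ 3)) := by
      intro j
      induction j with
      | zero => intro _; simp
      | succ j ih =>
        intro hj
        have h1 := ih (by omega)
        have h2 := Nat.mul_le_mul_right (12 * Q ^ 3) hj
        have h2' : (j + 1) * (12 * Q ^ 3) = j * (12 * Q ^ 3) + 12 * Q ^ 3 := by ring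
        have h3 := hstep Q (Q ^ 5 + j * (12 * Q ^ 3)) hQ hNQ (Nat.le_add_right _ _) (by omega)
        rw [h2', ← add_assoc]
        refine le_trans ?_ h3
        rw [pow_succ', mul_assoc]
        gcongr
    have h1 := hit _ le_rfl
    have h2 := one_add_mul_le_pow (a := 1 / (1280 * Q : ℝ))
      (le_trans (by norm_num) (by positivity : (0:ℝ) ≤ 1 / (1280 * Q : ℝ))) (2048 * 1280 * Q)
    have h3 : ((2048 * 1280 * Q : ℕ) : ℝ) * (1 / (1280 * Q : ℝ)) = 2048 := by
      push_cast; field_simp; norm_num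
    rw [h3] at h2
    have h4 : 0 ≤ E (Q ^ 5) := Finset.sum_nonneg fun i _ => hε i
    have h5 : E (Q ^ 5 + 2048 * 1280 * Q * (12 * Q ^ 3)) ≤ E ((2 * Q) ^ 5) := by
      apply hmono
      have : (2 * Q) ^ 5 = 32 * Q ^ 5 := by ring
      omega
    calc 2048 * E (Q ^ 5) ≤ (1 + 1 / (1280 * Q : ℝ)) ^ (2048 * 1280 * Q) * E (Q ^ 5) := by
          gcongr; linarith
      _ ≤ _ := h1.trans h5
  obtain ⟨Q, hQdef⟩ : ∃ Q, Q = Q₀ + N + 31457280 := ⟨_, rfl⟩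
  have hiter : ∀ k : ℕ, 2048 ^ k * E (Q ^ 5) ≤ E ((2 ^ k * Q) ^ 5) := by
    intro k
    induction k with
    | zero => simp
    | succ k ih =>
      have hge : Q ≤ 2 ^ k * Q := Nat.le_mul_of_pos_left _ (by positivity)
      have h1 := hdouble (2 ^ k * Q) (by omega) (by omega) (by omega)
      rw [pow_succ' 2 k, mul_assoc 2]
      refine le_trans ?_ h1
      rw [pow_succ', mul_assoc]
      gcongr
  have hQ1 : (1:ℝ) ≤ Q := by
    have : 1 ≤ Q := by omega
    exact_mod_cast this
  have hK0 : 0 ≤ K := by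
    have := hK 0
    simpa using this
  obtain ⟨k, hk⟩ := pow_unbounded_of_one_lt (4 * K * Q ^ 10 / ε 0) (one_lt_two (α := ℝ))
  rw [div_lt_iff₀ hε0] at hk
  have h1 := (hiter k).trans (hK _)
  have h2 : ε 0 ≤ E (Q ^ 5) := hE1 _ (Nat.one_le_pow _ _ (by omega))
  have h3 : (2:ℝ) ^ k * (1024 ^ k * ε 0) ≤ 1024 ^ k * (4 * K * Q ^ 10) := by
    calc (2:ℝ) ^ k * (1024 ^ k * ε 0) = 2048 ^ k * ε 0 := by
          rw [← mul_assoc, ← mul_pow]; norm_num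
      _ ≤ 2048 ^ k * E (Q ^ 5) := by gcongr
      _ ≤ K * (1 + (((2 ^ k * Q) ^ 5 : ℕ) : ℝ)) ^ 2 := h1
      _ ≤ K * (2 * (((2:ℝ) ^ k * Q) ^ 5)) ^ 2 := by
          push_cast
          have : (1:ℝ) ≤ ((2:ℝ) ^ k * Q) ^ 5 :=
            one_le_pow₀ (one_le_mul_of_one_le_of_one_le (one_le_pow₀ one_le_two) hQ1)
          gcongr
          linarith
      _ = ((2:ℝ) ^ k) ^ 10 * (4 * K * Q ^ 10) := by ring
      _ = _ := by rw [← pow_mul, mul_comm k 10, pow_mul]; norm_num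
  have h4 : (0:ℝ) < 1024 ^ k := by positivity
  nlinarith

namespace BalancedSeries

variable {β : ℝ} {c d : ℕ → ℝ} {f g : ℝ → ℝ}

lemma energy_zero (h : BalancedSeries β c f) (h' : BalancedSeries β d g) : energy c d f g 0 = 0 := by
  obtain ⟨K, _, hK⟩ := h.energy_growth h'
  obtain ⟨C, Q₀, _, hQ₀, hw⟩ := h.energy_window h'
  exact eq_zero_of_window_growth (h.energy_nonneg h') hQ₀ hK hw

/-- Vanishing energy at index `0` forces the two weights of index `0` to agree everywhere. -/
lemma weight_zero_eq (h : BalancedSeries β c f) (h' : BalancedSeries β d g) {x : ℝ} (hx : 0 < x) :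
    weight d g 0 x = weight c f 0 x := by
  have hcont : ContinuousOn (localEnergy c d f g 0) (Ioi 0) := by
    have h1 := h.continuousOn_weight 0
    have h2 := h'.continuousOn_weight 0
    exact (h2.sub h1).mul ((h2.log fun y hy => (h'.weight_pos hy 0).ne').sub
      (h1.log fun y hy => (h.weight_pos hy 0).ne'))
  have hae : localEnergy c d f g 0 =ᵐ[volume.restrict (Ioi 0)] 0 := by
    refine (setIntegral_eq_zero_iff_of_nonneg_ae ?_ (h.integrable_localEnergy h' 0)).1 (h.energy_zero h')
    filter_upwards [ae_restrict_mem measurableSet_Ioi] with y hy using h.localEnergy_nonneg h' hy 0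
  have hz : EqOn (localEnergy c d f g 0) 0 (Ioi 0) :=
    Measure.eqOn_open_of_ae_eq hae isOpen_Ioi hcont continuousOn_const
  have h1 := h.localEnergy_ge h' hx 0
  rw [hz hx] at h1
  have h2 : 0 < weight d g 0 x + weight c f 0 x := add_pos (h'.weight_pos hx 0) (h.weight_pos hx 0)
  have h3 : (weight d g 0 x - weight c f 0 x) ^ 2 ≤ 0 := by
    have h4 : (weight d g 0 x - weight c f 0 x) ^ 2 / (weight d g 0 x + weight c f 0 x) ≤ 0 := h1
    rwa [div_le_iff₀ h2, zero_mul] at h4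
  have h5 : weight d g 0 x - weight c f 0 x = 0 := by
    rw [← sq_eq_zero_iff]; exact le_antisymm h3 (sq_nonneg _)
  linarith

/-- Balanced series are unique up to a constant factor: `g / f` is constant since the weights of
index `0` agree, and then comparing the integrals of the weights of index `n` gives the ratio of the
coefficients. -/
theorem unique (h : BalancedSeries β c f) (h' : BalancedSeries β d g) (n : ℕ) :
    d n * c 0 = d 0 * c n := by
  have e : EqOn (weight d g n) (fun x => d n * c 0 / (d 0 * c n) * weight c f n x) (Ioi 0) := by
    intro x hx
    have h1 := h.weight_zero_eq h' hx
    have hx0 : 0 < x := hx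
    have hf := h.f_pos hx0.le
    have hg := h'.f_pos hx0.le
    have hc0 := h.pos 0
    have hd0 := h'.pos 0
    have hcn := h.pos n
    unfold weight at h1 ⊢
    rw [pow_zero, mul_one, mul_one, div_eq_div_iff hg.ne' hf.ne'] at h1
    have hg' : g x = d 0 * f x / c 0 := by field_simp; linarith
    rw [hg']
    field_simp
  have h1 := h'.integral_weight n
  rw [setIntegral_congr_fun measurableSet_Ioi e, integral_const_mul, h.integral_weight n] at h1
  have hne : (1 - if n = 0 then β else 0) ≠ 0 := by
    have := h.hβ1
    split_ifs <;> linarith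
  have hcn := h.pos n
  have hd0 := h'.pos 0
  have h2 := mul_right_cancel₀ hne (h1.trans (one_mul _).symm)
  rwa [div_eq_one_iff_eq (by positivity)] at h2

end BalancedSeries

/-! ### The theorem -/

theorem stmt16 (β : ℝ) (hβ : β ∈ Set.Ico (0:ℝ) 1)
    (c cbar : ℕ → ℝ) (hc : ∀ n, 0 < c n) (hcbar : ∀ n, 0 < cbar n)
    (f₀ f₁ : ℝ → ℝ)
    (hf₀ : ∀ x : ℝ, f₀ x = ∑' n : ℕ, c n * x ^ n)
    (hf₁ : ∀ x : ℝ, f₁ x = ∑' n : ℕ, cbar n * x ^ n)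
    (hne : f₀ ≠ f₁)
    (hbal₀ : ∀ n : ℕ,
      (∫ x in Set.Ioi (0:ℝ), c n * x ^ n / f₀ x) = 1 - if n = 0 then β else 0)
    (hbal₁ : ∀ n : ℕ,
      (∫ x in Set.Ioi (0:ℝ), cbar n * x ^ n / f₁ x) = 1 - if n = 0 then β else 0)
    (i : ℕ) (hci : c i = cbar i)
    (b : ℝ → ℝ)
    (hb : ∀ t : ℝ, b t = ∫ x in Set.Ioi (0:ℝ),
        (t * cbar i + (1-t) * c i) * x ^ i / (t * f₁ x + (1-t) * f₀ x)) :
    (∀ t ∈ Set.Icc (0:ℝ) 1,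
      (deriv (deriv b) t = ∫ x in Set.Ioi (0:ℝ),
        2 * x ^ i * (t * cbar i + (1-t) * c i) * (f₁ x - f₀ x)^2 /
          (t * f₁ x + (1-t) * f₀ x)^3) ∧
      0 < deriv (deriv b) t) ∧
    deriv b 0 < 0 ∧ 0 < deriv b 1 := by
  -- the hypotheses are contradictory, by uniqueness of balanced series
  exfalso
  have h : BalancedSeries β c f₀ := ⟨hβ.1, hβ.2, hc, hf₀, hbal₀⟩
  have h' : BalancedSeries β cbar f₁ := ⟨hβ.1, hβ.2, hcbar, hf₁, hbal₁⟩
  have h0 : c 0 = cbar 0 := by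
    have h1 := h.unique h' i
    rw [← hci, mul_comm] at h1
    exact mul_right_cancel₀ (hc i).ne' h1
  have hcc : c = cbar := by
    ext n
    have h1 := h.unique h' n
    rw [← h0, mul_comm] at h1
    exact (mul_left_cancel₀ (hc 0).ne' h1).symm
  apply hne
  ext x
  rw [hf₀, hf₁, hcc]
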